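/- Fix an integer r ≥ 1 and constants K ≥ 1, C > 0. There exists a constant c > 0 depending only on r, C and K such that the following holds: for every n ∈ ℕ, every choice of integer sample sizes n_1 < n_2 < … < n_r with n/K ≤ n_1 and n_r ≤ n whose jackknife coefficients C_i = ∏_{j≠i} n_i/(n_i − n_j) satisfy Σ_{i=1}^r |C_i| ≤ C, and every continuous function f : [0,1] → ℝ, one has sup_{p∈[0,1]} |Σ_{i=1}^r C_i B_{n_i}[f](p) − f(p)| ≤ c ( ω_φ^{2r}(f, 1/√n) + n^{−r} ‖f‖ ). -/

import Mathlib

/-- Bernstein operator: `B_m[g](p) = Σ_{k=0}^m C(m,k) p^k (1-p)^{m-k} g(k/m)`. -/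
noncomputable def bernstein' (m : ℕ) (g : ℝ → ℝ) (p : ℝ) : ℝ :=
  ∑ k ∈ Finset.range (m + 1), (m.choose k : ℝ) * p ^ k * (1 - p) ^ (m - k) * g ((k : ℝ) / m)

/-- `r`-th symmetric difference of `g` with step `h`, vanishing near the boundary of `[0,1]`. -/
noncomputable def ditzSymmDiff (r : ℕ) (h : ℝ) (g : ℝ → ℝ) (x : ℝ) : ℝ :=
  if x - r * h / 2 ∈ Set.Icc (0:ℝ) 1 ∧ x + r * h / 2 ∈ Set.Icc (0:ℝ) 1 then
    ∑ k ∈ Finset.range (r + 1), (-1 : ℝ) ^ k * (r.choose k : ℝ) * g (x + r * h / 2 - k * h)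
  else 0

/-- `r`-th Ditzian–Totik modulus of smoothness with weight `φ(x) = √(x(1-x))`. -/
noncomputable def dtMod (r : ℕ) (g : ℝ → ℝ) (t : ℝ) : ℝ :=
  sSup {y : ℝ | ∃ h x : ℝ, 0 < h ∧ h ≤ t ∧ x ∈ Set.Icc (0:ℝ) 1 ∧
    y = |ditzSymmDiff r (h * Real.sqrt (x * (1 - x))) g x|}

/-- Sup norm on `[0,1]`. -/
noncomputable def supAbsOn (g : ℝ → ℝ) : ℝ := sSup ((fun p => |g p|) '' Set.Icc (0:ℝ) 1)

/-- Jackknife coefficients `C_i = ∏_{j≠i} n_i/(n_i - n_j)`. -/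
noncomputable def jackCoeff {r : ℕ} (ns : Fin r → ℕ) (i : Fin r) : ℝ :=
  ∏ j ∈ Finset.univ.erase i, (ns i : ℝ) / ((ns i : ℝ) - (ns j : ℝ))

/-- Sup over `p ∈ [0,1]` of the `r`-jackknife bias `|Σ_i C_i B_{n_i}[f](p) - f(p)|`. -/
noncomputable def jackBias {r : ℕ} (ns : Fin r → ℕ) (f : ℝ → ℝ) : ℝ :=
  sSup ((fun p => |(∑ i, jackCoeff ns i * bernstein' (ns i) f p) - f p|) '' Set.Icc (0:ℝ) 1)

/-!
Fix `p ≤ 1 / 2` (the other half follows by reflecting `x ↦ 1 - x`) and put `q = max p (1 / N)`, so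
that `√(q / N)` is the standard deviation of a binomial proportion near `p`. A Taylor polynomial
at `q` of a Steklov mean of `f` with step of order `√(q / N)` approximates `f` with an error
controlled by the modulus of smoothness and growing polynomially in `(x - q) ^ 2 * N / q`; the
binomial moments bound the contribution of this error to the jackknife.

The jackknife coefficients are the values at `0` of the Lagrange basis on the nodes `1 / n_i`, so
they annihilate `n_i⁻¹, …, n_i^{-(r-1)}`, and central moments of order at most `r` drop out of the
bias of the polynomial. The Taylor coefficients of order `s > r` are small as well: by Markov's
inequality the polynomials at scales `q` and `2 * q` have close coefficients, and since the
admissible size of these coefficients, a multiple of `q ^ (r - s)`, decays geometrically as `q`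
doubles, the differences telescope up to `q ≈ 1 / 2`, where `‖f‖` bounds everything.
-/

section Steklov

/-- The Steklov mean of `g` with step `δ`: its average over `[x, x + δ]`, written as an integral
over the unit interval so that it makes sense for every real `δ`, with value `g x` at `δ = 0`. -/
noncomputable def stepMean (δ : ℝ) (g : ℝ → ℝ) (x : ℝ) : ℝ := ∫ u in (0 : ℝ)..1, g (x + δ * u)

/-- The higher-order Steklov mean of order `k`: the `k`-fold iterated means of `f` with steps
`δ, 2δ, …, kδ`, combined so that the error `f - steklovMean k δ f` is an average of `k`-th
differences of `f`. -/
noncomputable def steklovMean (k : ℕ) (δ : ℝ) (f : ℝ → ℝ) (x : ℝ) : ℝ :=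
  ∑ j ∈ Finset.range k, (-1) ^ j * (k.choose (j + 1) : ℝ) * (stepMean ((j + 1 : ℕ) * δ))^[k] f x

variable {f g : ℝ → ℝ} {δ M x : ℝ} {k : ℕ}

theorem stepMean_zero (g : ℝ → ℝ) : stepMean 0 g = g := by
  funext x
  simp [stepMean]

theorem continuous_stepMean (hg : Continuous g) (δ : ℝ) : Continuous (stepMean δ g) := by
  unfold stepMean
  apply intervalIntegral.continuous_parametric_intervalIntegral_of_continuous'
  simp only [Function.uncurry_def]
  fun_prop

theorem continuous_stepMean_iterate (hg : Continuous g) (δ : ℝ) (k : ℕ) :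
    Continuous ((stepMean δ)^[k] g) := by
  induction k with
  | zero => exact hg
  | succ k ih =>
    rw [Function.iterate_succ_apply']
    exact continuous_stepMean ih δ

theorem hasDerivAt_stepMean (hg : Continuous g) (hδ : δ ≠ 0) (x : ℝ) :
    HasDerivAt (stepMean δ g) (δ⁻¹ * fwdDiff δ g x) x := by
  have primitive : stepMean δ g =
      fun y => δ⁻¹ * ((∫ u in (0 : ℝ)..(y + δ), g u) - ∫ u in (0 : ℝ)..y, g u) := by
    funext y
    rw [stepMean, intervalIntegral.integral_comp_add_mul _ hδ,
      intervalIntegral.integral_interval_sub_left (hg.intervalIntegrable _ _)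
        (hg.intervalIntegrable _ _)]
    simp
  have ftc (y : ℝ) : HasDerivAt (fun y => ∫ u in (0 : ℝ)..y, g u) (g y) y :=
    (hg.integral_hasStrictDerivAt 0 y).hasDerivAt
  rw [primitive]
  exact (((ftc (x + δ)).comp_add_const x δ).sub (ftc x)).const_mul _

theorem deriv_stepMean (hg : Continuous g) (hδ : δ ≠ 0) :
    deriv (stepMean δ g) = δ⁻¹ • fwdDiff δ g :=
  funext fun x => (hasDerivAt_stepMean hg hδ x).deriv

theorem contDiff_fwdDiff {n : WithTop ℕ∞} (hg : ContDiff ℝ n g) (δ : ℝ) :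
    ContDiff ℝ n (fwdDiff δ g) :=
  (hg.comp (contDiff_id.add contDiff_const)).sub hg

theorem iteratedDeriv_fwdDiff (hg : ContDiff ℝ k g) (δ : ℝ) :
    iteratedDeriv k (fwdDiff δ g) = fwdDiff δ (iteratedDeriv k g) := by
  funext x
  have hshift : ContDiff ℝ k fun y => g (y + δ) := hg.comp (contDiff_id.add contDiff_const)
  unfold fwdDiff
  rw [iteratedDeriv_fun_sub hshift.contDiffAt hg.contDiffAt, iteratedDeriv_comp_add_const]

theorem contDiff_stepMean_iterate (hg : Continuous g) (hδ : δ ≠ 0) (k : ℕ) :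
    ContDiff ℝ k ((stepMean δ)^[k] g) := by
  induction k with
  | zero => exact contDiff_zero.2 hg
  | succ k ih =>
    have hk := continuous_stepMean_iterate hg δ k
    rw [Function.iterate_succ_apply']
    push_cast
    refine contDiff_succ_iff_deriv.2
      ⟨fun x => (hasDerivAt_stepMean hk hδ x).differentiableAt, by simp, ?_⟩
    rw [deriv_stepMean hk hδ]
    exact contDiff_const.smul (contDiff_fwdDiff ih δ)

theorem iteratedDeriv_stepMean_iterate (hg : Continuous g) (hδ : δ ≠ 0) (k : ℕ) :
    iteratedDeriv k ((stepMean δ)^[k] g) = δ⁻¹ ^ k • (fwdDiff δ)^[k] g := by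
  induction k with
  | zero => simp
  | succ k ih =>
    rw [iteratedDeriv_succ', Function.iterate_succ_apply', Function.iterate_succ_apply',
      deriv_stepMean (continuous_stepMean_iterate hg δ k) hδ]
    funext x
    rw [iteratedDeriv_const_smul_field, iteratedDeriv_fwdDiff (contDiff_stepMean_iterate hg hδ k),
      ih, fwdDiff_const_smul, Pi.smul_apply, Pi.smul_apply, smul_smul, pow_succ']

theorem stepMean_iterate_scale (g : ℝ → ℝ) (δ x a : ℝ) (k : ℕ) (w : ℝ) :
    (stepMean (a * δ))^[k] g (x + a * w) = (stepMean δ)^[k] (fun v => g (x + a * v)) w := by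
  induction k generalizing w with
  | zero => rfl
  | succ k ih =>
    simp only [Function.iterate_succ_apply', stepMean, ← ih]
    ring_nf

theorem stepMean_iterate_sum {ι : Type*} (s : Finset ι) (c : ι → ℝ) {H : ι → ℝ → ℝ}
    (hH : ∀ i, Continuous (H i)) (δ : ℝ) (k : ℕ) :
    (stepMean δ)^[k] (fun v => ∑ i ∈ s, c i * H i v) =
      fun w => ∑ i ∈ s, c i * (stepMean δ)^[k] (H i) w := by
  induction k with
  | zero => rfl
  | succ k ih =>
    funext w
    simp only [Function.iterate_succ_apply', ih, stepMean]
    rw [intervalIntegral.integral_finsetSum]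
    · simp only [intervalIntegral.integral_const_mul]
    · intro i _
      have := continuous_stepMean_iterate (hH i) δ k
      exact Continuous.intervalIntegrable (by fun_prop) _ _

theorem abs_stepMean_iterate_le (hδ : 0 ≤ δ) (hM : ∀ v ∈ Set.Icc x (x + k * δ), |g v| ≤ M) :
    |(stepMean δ)^[k] g x| ≤ M := by
  induction k generalizing x with
  | zero => exact hM x (by simp)
  | succ k ih =>
    rw [Function.iterate_succ_apply']
    have hu : ∀ u ∈ Set.uIoc (0 : ℝ) 1, ‖(stepMean δ)^[k] g (x + δ * u)‖ ≤ M := by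
      intro u hu
      rw [Set.uIoc_of_le zero_le_one] at hu
      refine ih fun v hv => hM v ⟨?_, ?_⟩
      · nlinarith [hu.1, hv.1]
      · push_cast
        nlinarith [hv.2, mul_le_mul_of_nonneg_left hu.2 hδ]
    simpa [stepMean] using intervalIntegral.norm_integral_le_of_norm_le_const hu

theorem sub_steklovMean (k : ℕ) (δ : ℝ) (f : ℝ → ℝ) (x : ℝ) :
    f x - steklovMean k δ f x =
      ∑ j ∈ Finset.range (k + 1), (-1) ^ j * (k.choose j : ℝ) * (stepMean (j * δ))^[k] f x := by
  rw [Finset.sum_range_succ', Nat.cast_zero, zero_mul, Function.iterate_fixed (stepMean_zero f),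
    steklovMean, sub_eq_add_neg, add_comm, ← Finset.sum_neg_distrib]
  simp [pow_succ]

theorem fwdDiff_iterate_eq_sum (k : ℕ) (v : ℝ) (f : ℝ → ℝ) (x : ℝ) :
    (fwdDiff v)^[k] f x =
      (-1) ^ k * ∑ j ∈ Finset.range (k + 1), (-1) ^ j * (k.choose j : ℝ) * f (x + j * v) := by
  rw [fwdDiff_iter_eq_sum_shift, Finset.mul_sum]
  refine Finset.sum_congr rfl fun j hj => ?_
  have hsign : (-1 : ℝ) ^ (k - j) = (-1) ^ k * (-1) ^ j := by
    rw [← pow_add]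
    refine neg_one_pow_congr ?_
    rw [Nat.even_sub (Finset.mem_range_succ_iff.1 hj), Nat.even_add]
  simp [hsign, mul_assoc]

theorem sub_steklovMean_eq_stepMean_fwdDiff (hf : Continuous f) (k : ℕ) (δ x : ℝ) :
    f x - steklovMean k δ f x =
      (-1) ^ k * (stepMean δ)^[k] (fun v => (fwdDiff v)^[k] f x) 0 := by
  have hsign : (-1 : ℝ) ^ k * (-1) ^ k = 1 := by rw [← mul_pow]; simp
  simp only [fwdDiff_iterate_eq_sum, Finset.mul_sum, ← mul_assoc]
  rw [stepMean_iterate_sum _ _ (fun j => by fun_prop), sub_steklovMean, Finset.mul_sum]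
  refine Finset.sum_congr rfl fun j _ => ?_
  rw [← stepMean_iterate_scale, mul_zero, add_zero]
  linear_combination (-(-1) ^ j * (k.choose j : ℝ) * (stepMean (j * δ))^[k] f x) * hsign

theorem fwdDiff_zero_iterate (hk : k ≠ 0) (f : ℝ → ℝ) (x : ℝ) : (fwdDiff 0)^[k] f x = 0 := by
  obtain ⟨k, rfl⟩ := Nat.exists_eq_succ_of_ne_zero hk
  simp [Function.iterate_succ_apply', fwdDiff]

theorem abs_sub_steklovMean_le (hk : k ≠ 0) (hf : Continuous f) (hδ : 0 < δ)
    (hM : ∀ v ∈ Set.Ioc 0 (k * δ), |(fwdDiff v)^[k] f x| ≤ M) :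
    |f x - steklovMean k δ f x| ≤ M := by
  have hkδ : 0 < k * δ := mul_pos (by exact_mod_cast hk.bot_lt) hδ
  rw [sub_steklovMean_eq_stepMean_fwdDiff hf, abs_mul, abs_neg_one_pow, one_mul]
  refine abs_stepMean_iterate_le hδ.le fun v hv => ?_
  rw [zero_add] at hv
  rcases hv.1.eq_or_lt with rfl | hv0
  · rw [fwdDiff_zero_iterate hk, abs_zero]
    exact (abs_nonneg _).trans (hM _ ⟨hkδ, le_rfl⟩)
  · exact hM v ⟨hv0, hv.2⟩

theorem contDiff_steklovMean (hf : Continuous f) (hδ : δ ≠ 0) (k : ℕ) :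
    ContDiff ℝ k (steklovMean k δ f) :=
  ContDiff.sum fun _ _ => contDiff_const.mul
    (contDiff_stepMean_iterate hf (mul_ne_zero (Nat.cast_ne_zero.2 (Nat.succ_ne_zero _)) hδ) k)

theorem iteratedDeriv_steklovMean (hf : Continuous f) (hδ : δ ≠ 0) (k : ℕ) (x : ℝ) :
    iteratedDeriv k (steklovMean k δ f) x =
      ∑ j ∈ Finset.range k, (-1) ^ j * (k.choose (j + 1) : ℝ) *
        (((j + 1 : ℕ) * δ)⁻¹ ^ k * (fwdDiff ((j + 1 : ℕ) * δ))^[k] f x) := by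
  have hjδ (j : ℕ) : ((j + 1 : ℕ) : ℝ) * δ ≠ 0 :=
    mul_ne_zero (Nat.cast_ne_zero.2 (Nat.succ_ne_zero _)) hδ
  unfold steklovMean
  rw [iteratedDeriv_fun_sum fun j _ =>
    (contDiff_const.mul (contDiff_stepMean_iterate hf (hjδ j) k)).contDiffAt]
  simp only [iteratedDeriv_const_mul_field, iteratedDeriv_stepMean_iterate hf (hjδ _),
    Pi.smul_apply, smul_eq_mul]

theorem abs_iteratedDeriv_steklovMean_le (hf : Continuous f) (hδ : 0 < δ) (hM0 : 0 ≤ M)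
    (hM : ∀ v ∈ Set.Ioc 0 (k * δ), |(fwdDiff v)^[k] f x| ≤ M) :
    |iteratedDeriv k (steklovMean k δ f) x| ≤ 2 ^ k * (M / δ ^ k) := by
  have hterm : ∀ j ∈ Finset.range k, |(-1) ^ j * (k.choose (j + 1) : ℝ) *
      (((j + 1 : ℕ) * δ)⁻¹ ^ k * (fwdDiff ((j + 1 : ℕ) * δ))^[k] f x)| ≤
        k.choose (j + 1) * (M / δ ^ k) := by
    intro j hj
    have hj1 : (1 : ℝ) ≤ (j + 1 : ℕ) := by exact_mod_cast Nat.le_add_left 1 j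
    have hjk : ((j + 1 : ℕ) : ℝ) ≤ k := by exact_mod_cast Finset.mem_range.1 hj
    have hdiff : |(fwdDiff ((j + 1 : ℕ) * δ))^[k] f x| ≤ M := hM _ ⟨by positivity, by gcongr⟩
    have hstep : ((j + 1 : ℕ) * δ)⁻¹ ≤ δ⁻¹ := by gcongr; exact le_mul_of_one_le_left hδ.le hj1
    rw [abs_mul, abs_mul, abs_neg_one_pow, one_mul, Nat.abs_cast, abs_mul, abs_pow,
      abs_of_pos (by positivity : 0 < ((j + 1 : ℕ) * δ)⁻¹), div_eq_inv_mul, ← inv_pow]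
    gcongr
  have hchoose : ∑ j ∈ Finset.range k, (k.choose (j + 1) : ℝ) ≤ 2 ^ k := by
    have hsum := Nat.sum_range_choose k
    rw [Finset.sum_range_succ'] at hsum
    exact_mod_cast (by omega : ∑ j ∈ Finset.range k, k.choose (j + 1) ≤ 2 ^ k)
  rw [iteratedDeriv_steklovMean hf hδ.ne']
  calc _ ≤ ∑ j ∈ Finset.range k, k.choose (j + 1) * (M / δ ^ k) :=
        (Finset.abs_sum_le_sum_abs _ _).trans (Finset.sum_le_sum hterm)
    _ ≤ _ := by rw [← Finset.sum_mul]; gcongr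

end Steklov

section PolynomialBounds

open Polynomial

variable {k : ℕ}

/-- The Taylor polynomial of `F` at `q` with the `k` terms of degree `< k`. -/
noncomputable def taylorPolynomial (k : ℕ) (F : ℝ → ℝ) (q : ℝ) : ℝ[X] :=
  ∑ i ∈ Finset.range k, C ((i.factorial : ℝ)⁻¹ * iteratedDeriv i F q) * (X - C q) ^ i

theorem natDegree_taylorPolynomial_lt (hk : 0 < k) (F : ℝ → ℝ) (q : ℝ) :
    (taylorPolynomial k F q).natDegree < k := by
  refine (natDegree_sum_le_of_forall_le (n := k - 1) _ _ fun i hi => ?_).trans_lt (by omega)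
  refine (natDegree_C_mul_le _ _).trans ?_
  rw [natDegree_pow, natDegree_X_sub_C, mul_one]
  exact Nat.le_sub_one_of_lt (Finset.mem_range.1 hi)

theorem taylorWithinEval_uIcc_eq_eval_taylorPolynomial {F : ℝ → ℝ} (hF : ContDiff ℝ k F)
    {q x : ℝ} (hqx : q ≠ x) :
    taylorWithinEval F k (Set.uIcc q x) q x = (taylorPolynomial (k + 1) F q).eval x := by
  rw [taylor_within_apply, taylorPolynomial, eval_finsetSum]
  refine Finset.sum_congr rfl fun i hi => ?_
  have hFi : ContDiff ℝ i F := hF.of_le (by exact_mod_cast Finset.mem_range_succ_iff.1 hi)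
  rw [iteratedDerivWithin_eq_iteratedDeriv (uniqueDiffOn_uIcc hqx) hFi.contDiffAt Set.left_mem_uIcc]
  simp only [smul_eq_mul, eval_mul, eval_C, eval_pow, eval_sub, eval_X]
  ring

theorem abs_sub_eval_taylorPolynomial_le {F : ℝ → ℝ} (hF : ContDiff ℝ k F)
    {q x M : ℝ} (hM : ∀ y ∈ Set.uIcc q x, |iteratedDeriv k F y| ≤ M) :
    |F x - (taylorPolynomial k F q).eval x| ≤ M * |x - q| ^ k := by
  rcases k with - | m
  · simpa [taylorPolynomial] using hM x Set.right_mem_uIcc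
  rcases eq_or_ne q x with rfl | hqx
  · simp [taylorPolynomial, Finset.sum_range_succ', eval_finsetSum]
  obtain ⟨y, hy, hremainder⟩ := taylor_mean_remainder_lagrange_iteratedDeriv (n := m) hqx
    (by exact_mod_cast hF.contDiffOn)
  have hMy := hM y (Set.uIoo_subset_uIcc_self hy)
  have : 0 ≤ M := (abs_nonneg _).trans hMy
  have hfact : (1 : ℝ) ≤ (m + 1).factorial := by exact_mod_cast Nat.factorial_pos _
  rw [← taylorWithinEval_uIcc_eq_eval_taylorPolynomial (hF.of_le (by simp)) hqx, hremainder,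
    abs_div, abs_mul, abs_pow, Nat.abs_cast]
  exact (div_le_self (by positivity) hfact).trans (by gcongr)

theorem eval_eq_sum_taylor_coeff {P : ℝ[X]} (hP : P.natDegree < k) (p x : ℝ) :
    P.eval x = ∑ s ∈ Finset.range k, (taylor p P).coeff s * (x - p) ^ s := by
  rw [← eval_eq_sum_range' (by rwa [natDegree_taylor]), taylor_eval, sub_add_cancel]

theorem exists_abs_eval_le {ι : Type*} (s : Finset ι) (P : ι → ℝ[X]) {S : Set ℝ}
    (hS : IsCompact S) : ∃ c, 1 ≤ c ∧ ∀ i ∈ s, ∀ x ∈ S, |(P i).eval x| ≤ c := by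
  obtain ⟨c, hc⟩ := hS.exists_bound_of_continuousOn (f := fun x => ∑ i ∈ s, |(P i).eval x|)
    (by fun_prop)
  refine ⟨max 1 c, le_max_left _ _, fun i hi x hx => ?_⟩
  calc |(P i).eval x| ≤ ∑ j ∈ s, |(P j).eval x| :=
        Finset.single_le_sum (fun j _ => abs_nonneg ((P j).eval x)) hi
    _ ≤ c := (le_abs_self _).trans (hc x hx)
    _ ≤ max 1 c := le_max_right _ _

theorem taylor_comp_C_add_C_mul_X (P : ℝ[X]) (a L z : ℝ) :
    taylor z (P.comp (C a + C L * X)) = (taylor (a + L * z) P).comp (C L * X) := by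
  simp only [taylor_apply, comp_assoc]
  congr 1
  simp only [add_comp, C_comp, mul_comp, X_comp, C_add, C_mul]
  ring

theorem natDegree_comp_C_add_C_mul_X_le (P : ℝ[X]) (a L : ℝ) :
    (P.comp (C a + C L * X)).natDegree ≤ P.natDegree := by
  have hlinear : (C a + C L * X).natDegree ≤ 1 := by compute_degree
  exact natDegree_comp_le.trans (mul_le_of_le_one_right' hlinear)

/-- `c` is a Markov constant for degree `< k`: a bound for a polynomial on an interval of length
`L` bounds its Taylor coefficients, rescaled by powers of `L`, at all points within `2 * L` of the
left endpoint. -/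
def IsMarkovConst (k : ℕ) (c : ℝ) : Prop :=
  ∀ P : ℝ[X], P.natDegree < k → ∀ a L B : ℝ, 0 < L → (∀ x ∈ Set.Icc a (a + L), |P.eval x| ≤ B) →
    ∀ s < k, ∀ y, |y - a| ≤ 2 * L → |(taylor y P).coeff s| * L ^ s ≤ c * B

theorem exists_abs_taylor_coeff_le_of_unitInterval (k : ℕ) :
    ∃ c, 1 ≤ c ∧ ∀ P : ℝ[X], P.natDegree < k → ∀ B, (∀ x ∈ Set.Icc (0 : ℝ) 1, |P.eval x| ≤ B) →
      ∀ s < k, ∀ z, |z| ≤ 2 → |(taylor z P).coeff s| ≤ c * B := by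
  set node : ℕ → ℝ := fun i => i / k
  set basis : ℕ → ℝ[X] := Lagrange.basis (Finset.range k) node
  obtain ⟨c, hc1, hc⟩ := exists_abs_eval_le (Finset.range k ×ˢ Finset.range k)
    (fun is => hasseDeriv is.2 (basis is.1)) (isCompact_Icc (a := (-2 : ℝ)) (b := 2))
  refine ⟨1 + k * c, by nlinarith [k.cast_nonneg (α := ℝ)], fun P hP B hB s hs z hz => ?_⟩
  have hk : (0 : ℝ) < k := by exact_mod_cast hs.bot_lt
  have hB0 : 0 ≤ B := (abs_nonneg _).trans (hB 0 (by simp))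
  have hinj : Set.InjOn node (Finset.range k) := fun _ _ _ _ hij => by
    exact_mod_cast (div_left_inj' hk.ne').1 hij
  have hinterpolate : P = ∑ i ∈ Finset.range k, C (P.eval (node i)) * basis i := by
    rw [← Lagrange.interpolate_apply]
    exact Lagrange.eq_interpolate hinj
      (by simpa using degree_le_natDegree.trans_lt (by exact_mod_cast hP))
  have hterm : ∀ i ∈ Finset.range k,
      |P.eval (node i) * (hasseDeriv s (basis i)).eval z| ≤ B * c := by
    intro i hi
    have hik : (i : ℝ) ≤ k := by exact_mod_cast (Finset.mem_range.1 hi).le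
    rw [abs_mul]
    exact mul_le_mul (hB _ ⟨by positivity, (div_le_one hk).2 hik⟩)
      (hc (i, s) (Finset.mk_mem_product hi (Finset.mem_range.2 hs)) z (abs_le.1 hz))
      (abs_nonneg _) hB0
  calc |(taylor z P).coeff s|
      = |∑ i ∈ Finset.range k, P.eval (node i) * (hasseDeriv s (basis i)).eval z| := by
        conv_lhs => rw [hinterpolate]
        simp [taylor_mul, ← taylor_coeff]
    _ ≤ ∑ _i ∈ Finset.range k, B * c :=
        (Finset.abs_sum_le_sum_abs _ _).trans (Finset.sum_le_sum hterm)
    _ = k * c * B := by rw [Finset.sum_const, Finset.card_range, nsmul_eq_mul]; ring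
    _ ≤ (1 + k * c) * B := by nlinarith

theorem exists_isMarkovConst (k : ℕ) : ∃ c, 1 ≤ c ∧ IsMarkovConst k c := by
  obtain ⟨c, hc1, hc⟩ := exists_abs_taylor_coeff_le_of_unitInterval k
  refine ⟨c, hc1, fun P hP a L B hL hB s hs y hy => ?_⟩
  have hz : |(y - a) / L| ≤ 2 := by rwa [abs_div, abs_of_pos hL, div_le_iff₀ hL]
  have hunit : ∀ x ∈ Set.Icc (0 : ℝ) 1, |(P.comp (C a + C L * X)).eval x| ≤ B := fun x hx => by
    rw [eval_comp]
    refine hB _ ⟨?_, ?_⟩ <;> simp <;> nlinarith [hx.1, hx.2]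
  have hcoeff := hc _ ((natDegree_comp_C_add_C_mul_X_le P a L).trans_lt hP) B hunit s hs _ hz
  rwa [taylor_comp_C_add_C_mul_X, comp_C_mul_X_coeff, mul_div_cancel₀ _ hL.ne', add_sub_cancel,
    abs_mul, abs_of_pos (pow_pos hL s)] at hcoeff

end PolynomialBounds

section Moments

open Polynomial

theorem X_mul_one_sub_X_mul_derivative_bernsteinPolynomial {R : Type*} [CommRing R] (m k : ℕ) :
    X * (1 - X) * derivative (bernsteinPolynomial R m k) =
      ((k : R[X]) - (m : R[X]) * X) * bernsteinPolynomial R m k := by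
  obtain hmk | hkm := lt_or_ge m k
  · simp [bernsteinPolynomial.eq_zero_of_lt R hmk]
  obtain ⟨j, rfl⟩ := Nat.exists_eq_add_of_le hkm
  have mul_pow_pred (y : R[X]) (n : ℕ) : y * ((n : R[X]) * y ^ (n - 1)) = n * y ^ n := by
    cases n with
    | zero => simp
    | succ n => rw [Nat.add_sub_cancel, pow_succ']; ring
  rw [bernsteinPolynomial, Nat.add_sub_cancel_left]
  simp only [derivative_mul, derivative_natCast, derivative_pow, derivative_sub,
    derivative_one, derivative_X, Nat.cast_add, map_natCast]
  linear_combination ((k + j).choose k : R[X]) * (1 - X) * (1 - X) ^ j * mul_pow_pred X k -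
    ((k + j).choose k : R[X]) * X * X ^ k * mul_pow_pred (1 - X) j

/-- The `s`-th central moment of the binomial distribution with `m` trials, as a polynomial in the
success probability. -/
noncomputable def binomMoment (m s : ℕ) : ℝ[X] :=
  ∑ k ∈ Finset.range (m + 1), bernsteinPolynomial ℝ m k * ((k : ℝ[X]) - (m : ℝ[X]) * X) ^ s

theorem binomMoment_zero (m : ℕ) : binomMoment m 0 = 1 := by
  simp [binomMoment, bernsteinPolynomial.sum]

theorem binomMoment_succ (m s : ℕ) :
    binomMoment m (s + 1) = X * (1 - X) *
      (derivative (binomMoment m s) + (s : ℝ[X]) * (m : ℝ[X]) * binomMoment m (s - 1)) := by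
  simp only [binomMoment, derivative_sum, Finset.mul_sum, ← Finset.sum_add_distrib]
  refine Finset.sum_congr rfl fun k _ => ?_
  simp only [derivative_mul, derivative_pow, derivative_sub, derivative_natCast, derivative_X,
    map_natCast]
  linear_combination -((k : ℝ[X]) - (m : ℝ[X]) * X) ^ s *
    X_mul_one_sub_X_mul_derivative_bernsteinPolynomial (R := ℝ) m k

theorem binomMoment_one (m : ℕ) : binomMoment m 1 = 0 := by
  simp [binomMoment_succ, binomMoment_zero]

/-- The coefficients, themselves polynomials in the success probability `p`, of the expansion of
the `s`-th central moment of the binomial distribution with `m` trials in powers of `m * p`.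
The recursion is the one `binomMoment_succ` imposes on them. -/
noncomputable def momentCoeff : ℕ → ℕ → ℝ[X]
  | 0, 0 => 1
  | 0, _ + 1 => 0
  | 1, _ => 0
  | _ + 2, 0 => 0
  | s + 2, i + 1 => (1 - X) * (((i + 1 : ℕ) : ℝ[X]) * momentCoeff (s + 1) (i + 1) +
      X * derivative (momentCoeff (s + 1) (i + 1)) + ((s + 1 : ℕ) : ℝ[X]) * momentCoeff s i)

theorem momentCoeff_eq_zero : ∀ {s i : ℕ}, s < 2 * i → momentCoeff s i = 0
  | 0, _ + 1, _ => by simp [momentCoeff]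
  | 1, _, _ => by simp [momentCoeff]
  | s + 2, i + 1, h => by
    rw [momentCoeff, momentCoeff_eq_zero (s := s + 1) (i := i + 1) (by omega),
      momentCoeff_eq_zero (s := s) (i := i) (by omega)]
    simp

theorem momentCoeff_succ_zero : ∀ s : ℕ, momentCoeff (s + 1) 0 = 0
  | 0 => by simp [momentCoeff]
  | _ + 1 => by simp [momentCoeff]

theorem binomMoment_eq_sum (m : ℕ) : ∀ {s D : ℕ}, s < D →
    binomMoment m s = ∑ i ∈ Finset.range D, ((m : ℝ[X]) * X) ^ i * momentCoeff s i
  | 0, D, hD => by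
    obtain ⟨D, rfl⟩ := Nat.exists_eq_add_of_le' hD
    simp [Finset.sum_range_succ', binomMoment_zero, momentCoeff]
  | 1, D, _ => by simp [binomMoment_one, momentCoeff]
  | s + 2, D, hD => by
    obtain ⟨D, rfl⟩ := Nat.exists_eq_add_of_le' (Nat.zero_lt_of_lt hD)
    rw [binomMoment_succ, binomMoment_eq_sum m (s := s + 1) (D := D + 1) (by omega),
      Nat.add_sub_cancel, binomMoment_eq_sum m (s := s) (D := D) (by omega),
      Finset.sum_range_succ', Finset.sum_range_succ', momentCoeff_succ_zero, momentCoeff_succ_zero,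
      mul_zero, add_zero, add_zero, derivative_sum, Finset.mul_sum,
      ← Finset.sum_add_distrib, Finset.mul_sum]
    refine Finset.sum_congr rfl fun i _ => ?_
    simp only [momentCoeff, derivative_mul, derivative_pow, derivative_natCast, derivative_X,
      map_natCast, Nat.add_sub_cancel]
    ring

theorem exists_abs_eval_momentCoeff_le (D : ℕ) : ∃ c, 1 ≤ c ∧ ∀ s < D, ∀ i < D,
    ∀ p ∈ Set.Icc (0 : ℝ) 1, |(momentCoeff s i).eval p| ≤ c := by
  obtain ⟨c, hc1, hc⟩ := exists_abs_eval_le (Finset.range D ×ˢ Finset.range D)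
    (fun si => momentCoeff si.1 si.2) (isCompact_Icc (a := (0 : ℝ)) (b := 1))
  exact ⟨c, hc1, fun s hs i hi =>
    hc (s, i) (Finset.mk_mem_product (Finset.mem_range.2 hs) (Finset.mem_range.2 hi))⟩

theorem exists_eval_binomMoment_even_le (k : ℕ) : ∃ c, 1 ≤ c ∧ ∀ (m : ℕ) (N p q : ℝ),
    p ∈ Set.Icc 0 1 → p ≤ q → m ≤ N → 1 ≤ N * q →
      (binomMoment m (2 * k)).eval p ≤ c * (N * q) ^ k := by
  obtain ⟨c, hc1, hc⟩ := exists_abs_eval_momentCoeff_le (2 * k + 1)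
  refine ⟨(2 * k + 1 : ℕ) * c, ?_, fun m N p q hp hpq hmN hNq => ?_⟩
  · exact one_le_mul_of_one_le_of_one_le (by exact_mod_cast Nat.le_add_left 1 _) hc1
  have hterm : ∀ i ∈ Finset.range (2 * k + 1),
      (m * p) ^ i * (momentCoeff (2 * k) i).eval p ≤ (N * q) ^ k * c := by
    intro i hi
    have hN0 : 0 ≤ N := m.cast_nonneg.trans hmN
    have hp0 := hp.1
    rcases le_or_gt i k with hik | hki
    · have hcoeff := (le_abs_self _).trans (hc (2 * k) (by omega) i (Finset.mem_range.1 hi) p hp)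
      have hpow : (m * p) ^ i ≤ (N * q) ^ k :=
        (pow_le_pow_left₀ (by positivity) (by gcongr) i).trans (pow_le_pow_right₀ hNq hik)
      exact (mul_le_mul_of_nonneg_left hcoeff (by positivity)).trans (by gcongr)
    · rw [momentCoeff_eq_zero (by omega), eval_zero, mul_zero]
      positivity
  rw [binomMoment_eq_sum m (Nat.lt_succ_self _), eval_finsetSum]
  simp only [eval_mul, eval_pow, eval_natCast, eval_X]
  refine (Finset.sum_le_card_nsmul _ _ _ hterm).trans_eq ?_
  rw [Finset.card_range, nsmul_eq_mul]
  ring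

end Moments

section BernsteinOperator

variable {m : ℕ} {f g : ℝ → ℝ} {p : ℝ}

theorem bernstein'_eq_sum_eval (m : ℕ) (g : ℝ → ℝ) (p : ℝ) :
    bernstein' m g p =
      ∑ k ∈ Finset.range (m + 1), (bernsteinPolynomial ℝ m k).eval p * g (k / m) := by
  simp [bernstein', bernsteinPolynomial]

theorem bernstein'_sub_pow (hm : m ≠ 0) (s : ℕ) (p : ℝ) :
    bernstein' m (fun x => (x - p) ^ s) p = (binomMoment m s).eval p / m ^ s := by
  have hm' : (m : ℝ) ≠ 0 := Nat.cast_ne_zero.2 hm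
  rw [bernstein'_eq_sum_eval, binomMoment, Polynomial.eval_finsetSum, Finset.sum_div]
  refine Finset.sum_congr rfl fun k _ => ?_
  simp only [Polynomial.eval_mul, Polynomial.eval_pow, Polynomial.eval_sub,
    Polynomial.eval_natCast, Polynomial.eval_X]
  rw [mul_div_assoc, ← div_pow, sub_div, mul_div_cancel_left₀ _ hm']

theorem natCast_div_mem_Icc {k : ℕ} (hk : k ≤ m) : (k / m : ℝ) ∈ Set.Icc (0 : ℝ) 1 :=
  ⟨by positivity, div_le_one_of_le₀ (by exact_mod_cast hk) (by positivity)⟩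

theorem bernstein'_congr (h : Set.EqOn f g (Set.Icc 0 1)) : bernstein' m f p = bernstein' m g p :=
  Finset.sum_congr rfl fun k hk => by
    rw [h (natCast_div_mem_Icc (Finset.mem_range_succ_iff.1 hk))]

theorem bernstein'_sub (m : ℕ) (f g : ℝ → ℝ) (p : ℝ) :
    bernstein' m (fun x => f x - g x) p = bernstein' m f p - bernstein' m g p := by
  simp only [bernstein', mul_sub, Finset.sum_sub_distrib]

theorem bernstein'_sum_mul {ι : Type*} (s : Finset ι) (c : ι → ℝ) (G : ι → ℝ → ℝ) (p : ℝ) :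
    bernstein' m (fun x => ∑ i ∈ s, c i * G i x) p = ∑ i ∈ s, c i * bernstein' m (G i) p := by
  simp only [bernstein', Finset.mul_sum]
  rw [Finset.sum_comm]
  exact Finset.sum_congr rfl fun i _ => Finset.sum_congr rfl fun k _ => by ring

theorem bernstein'_const_add_mul (m : ℕ) (a b : ℝ) (f : ℝ → ℝ) (p : ℝ) :
    bernstein' m (fun x => a + b * f x) p = a + b * bernstein' m f p := by
  have hone : ∑ k ∈ Finset.range (m + 1), (bernsteinPolynomial ℝ m k).eval p = 1 := by
    rw [← Polynomial.eval_finsetSum, bernsteinPolynomial.sum, Polynomial.eval_one]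
  simp only [bernstein'_eq_sum_eval, mul_add, Finset.sum_add_distrib, ← Finset.sum_mul, hone,
    one_mul, Finset.mul_sum, mul_left_comm]

theorem abs_bernstein'_le (hp : p ∈ Set.Icc (0 : ℝ) 1) (h : ∀ x ∈ Set.Icc (0 : ℝ) 1, |f x| ≤ g x) :
    |bernstein' m f p| ≤ bernstein' m g p := by
  have := sub_nonneg.2 hp.2
  have := hp.1
  refine (Finset.abs_sum_le_sum_abs _ _).trans (Finset.sum_le_sum fun k hk => ?_)
  rw [abs_mul, abs_of_nonneg (by positivity)]
  gcongr
  exact h _ (natCast_div_mem_Icc (Finset.mem_range_succ_iff.1 hk))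

theorem bernstein'_reflect (hm : m ≠ 0) (f : ℝ → ℝ) (p : ℝ) :
    bernstein' m (fun x => f (1 - x)) p = bernstein' m f (1 - p) := by
  have hm' : (m : ℝ) ≠ 0 := Nat.cast_ne_zero.2 hm
  rw [bernstein', bernstein', ← Finset.sum_range_reflect]
  refine Finset.sum_congr rfl fun k hk => ?_
  have hkm := Finset.mem_range_succ_iff.1 hk
  rw [Nat.add_sub_cancel, Nat.choose_symm hkm, Nat.sub_sub_self hkm, sub_sub_cancel,
    Nat.cast_sub hkm, sub_div, div_self hm', sub_sub_cancel]
  ring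

end BernsteinOperator

section Growth

variable {m k : ℕ} {N p q x : ℝ}

/-- The squared distance of `x` from `q`, in units of the variance scale `q / N` of a binomial
proportion with `N` trials near `q`. -/
noncomputable def scaledSqDist (N q x : ℝ) : ℝ := (x - q) ^ 2 * (N / q)

theorem scaledSqDist_nonneg (hNq : 0 ≤ N / q) : 0 ≤ scaledSqDist N q x :=
  mul_nonneg (sq_nonneg _) hNq

theorem one_add_scaledSqDist_pow_le (hNq : 0 ≤ N / q) (hp : scaledSqDist N q p ≤ 1) (k : ℕ) :
    1 + scaledSqDist N q x ^ k ≤ (1 + 4 ^ k) + 4 ^ k * (N / q) ^ k * (x - p) ^ (2 * k) := by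
  have hcentre : scaledSqDist N q x ≤ 2 * ((x - p) ^ 2 * (N / q) + 1) := by
    have hsq : (x - q) ^ 2 ≤ 2 * ((x - p) ^ 2 + (p - q) ^ 2) := by
      linarith [sq_nonneg (x - p - (p - q))]
    unfold scaledSqDist at hp ⊢
    linarith [mul_le_mul_of_nonneg_right hsq hNq]
  have hx0 : 0 ≤ scaledSqDist N q x := scaledSqDist_nonneg hNq
  calc 1 + scaledSqDist N q x ^ k
      ≤ 1 + (2 * ((x - p) ^ 2 * (N / q) + 1)) ^ k := by gcongr
    _ ≤ 1 + 2 ^ k * (2 ^ k * (((x - p) ^ 2 * (N / q)) ^ k + 1 ^ k)) := by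
        rw [mul_pow]
        gcongr
        exact (add_pow_le (by positivity) zero_le_one k).trans (by gcongr <;> norm_num)
    _ = _ := by
        rw [one_pow, mul_pow, pow_mul, show (4 : ℝ) = 2 * 2 by norm_num, mul_pow]
        ring

theorem exists_bernstein'_one_add_scaledSqDist_pow_le (k : ℕ) (K : ℝ) :
    ∃ c, 0 < c ∧ ∀ (m : ℕ) (N p q : ℝ), p ∈ Set.Icc 0 1 → p ≤ q → m ≤ N → N ≤ K * m →
      1 ≤ N * q → scaledSqDist N q p ≤ 1 →
        bernstein' m (fun x => 1 + scaledSqDist N q x ^ k) p ≤ c := by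
  obtain ⟨c, hc1, hc⟩ := exists_eval_binomMoment_even_le k
  refine ⟨1 + 4 ^ k + 4 ^ k * (c * |K| ^ (2 * k)), by positivity, ?_⟩
  intro m N p q hp hpq hmN hNK hNq hD
  have hN : 0 < N := (m.cast_nonneg.trans hmN).lt_of_ne' (by rintro rfl; linarith)
  have hq : 0 < q := pos_of_mul_pos_right (zero_lt_one.trans_le hNq) hN.le
  have hm : m ≠ 0 := by rintro rfl; simp at hNK; linarith
  have hm' : (0 : ℝ) < m := by exact_mod_cast hm.bot_lt
  have hmoment : (N / q) ^ k * ((binomMoment m (2 * k)).eval p / m ^ (2 * k)) ≤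
      c * |K| ^ (2 * k) := by
    calc _ ≤ (N / q) ^ k * (c * (N * q) ^ k / m ^ (2 * k)) := by
          gcongr
          exact hc m N p q hp hpq hmN hNq
      _ = c * (N / m) ^ (2 * k) := by
          rw [div_pow, mul_pow, div_pow, two_mul, pow_add N]
          field_simp
      _ ≤ _ := by
          gcongr
          exact ((div_le_iff₀ hm').2 hNK).trans (le_abs_self K)
  have hpointwise : ∀ x ∈ Set.Icc (0 : ℝ) 1, |1 + scaledSqDist N q x ^ k| ≤
      (1 + 4 ^ k) + 4 ^ k * (N / q) ^ k * (x - p) ^ (2 * k) := fun x _ => by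
    have : 0 ≤ scaledSqDist N q x := scaledSqDist_nonneg (by positivity)
    rw [abs_of_nonneg (by positivity)]
    exact one_add_scaledSqDist_pow_le (by positivity) hD k
  calc _ ≤ _ := (le_abs_self _).trans (abs_bernstein'_le hp hpointwise)
    _ = 1 + 4 ^ k + 4 ^ k * ((N / q) ^ k * ((binomMoment m (2 * k)).eval p / m ^ (2 * k))) := by
        rw [bernstein'_const_add_mul, bernstein'_sub_pow hm, mul_assoc]
    _ ≤ _ := by gcongr

end Growth

section Jackknife

variable {r : ℕ} {ns : Fin r → ℕ}

theorem sum_jackCoeff_mul_inv_pow (hinj : Function.Injective ns) (hpos : ∀ i, ns i ≠ 0) {j : ℕ}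
    (hj : j < r) : ∑ i, jackCoeff ns i * (ns i : ℝ)⁻¹ ^ j = if j = 0 then 1 else 0 := by
  have hne (i : Fin r) : (ns i : ℝ) ≠ 0 := Nat.cast_ne_zero.2 (hpos i)
  have hnodes : Set.InjOn (fun i => (ns i : ℝ)⁻¹) (Finset.univ : Finset (Fin r)) :=
    fun a _ b _ hab => hinj (by exact_mod_cast inv_injective hab)
  have hbasis (i : Fin r) :
      (Lagrange.basis Finset.univ (fun i => (ns i : ℝ)⁻¹) i).eval 0 = jackCoeff ns i := by
    rw [Lagrange.basis, Polynomial.eval_prod, jackCoeff]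
    refine Finset.prod_congr rfl fun j hj => ?_
    have hij : (ns i : ℝ) - ns j ≠ 0 :=
      sub_ne_zero.2 fun h => Finset.ne_of_mem_erase hj (hinj (by exact_mod_cast h.symm))
    have hi := hne i
    have hj := hne j
    simp only [Lagrange.basisDivisor, Polynomial.eval_mul, Polynomial.eval_C, Polynomial.eval_sub,
      Polynomial.eval_X, zero_sub, inv_sub_inv hi hj]
    rw [← neg_sub (ns i : ℝ)]
    field_simp
  have hinterpolate := Lagrange.eq_interpolate (f := (Polynomial.X : Polynomial ℝ) ^ j) hnodes
    (by rw [Polynomial.degree_X_pow, Finset.card_univ, Fintype.card_fin]; exact_mod_cast hj)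
  have hzero := congrArg (Polynomial.eval 0) hinterpolate
  simp only [Lagrange.interpolate_apply, Polynomial.eval_finsetSum, Polynomial.eval_mul,
    Polynomial.eval_C, hbasis, Polynomial.eval_pow, Polynomial.eval_X, zero_pow_eq] at hzero
  simp only [hzero, mul_comm]

/-- Sample sizes comparable to `N` up to the factor `K`, whose jackknife coefficients have
absolute sum at most `C`. -/
structure IsAdmissible (ns : Fin r → ℕ) (N K C : ℝ) : Prop where
  injective : Function.Injective ns
  pos : 0 < N
  le (i : Fin r) : ns i ≤ N
  le_mul (i : Fin r) : N ≤ K * ns i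
  sum_abs_jackCoeff_le : ∑ i, |jackCoeff ns i| ≤ C

namespace IsAdmissible

variable {N K C : ℝ}

theorem ne_zero (h : IsAdmissible ns N K C) (i : Fin r) : ns i ≠ 0 := by
  intro hi
  have := h.le_mul i
  rw [hi, Nat.cast_zero, mul_zero] at this
  exact h.pos.not_ge this

theorem abs_sum_jackCoeff_mul_le (h : IsAdmissible ns N K C) {b : Fin r → ℝ} {B : ℝ}
    (hB : 0 ≤ B) (hb : ∀ i, |b i| ≤ B) : |∑ i, jackCoeff ns i * b i| ≤ C * B := by
  calc |∑ i, jackCoeff ns i * b i| ≤ ∑ i, |jackCoeff ns i| * B := by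
        refine (Finset.abs_sum_le_sum_abs _ _).trans (Finset.sum_le_sum fun i _ => ?_)
        rw [abs_mul]
        gcongr
        exact hb i
    _ ≤ C * B := by
        rw [← Finset.sum_mul]
        exact mul_le_mul_of_nonneg_right h.sum_abs_jackCoeff_le hB

theorem inv_le (h : IsAdmissible ns N K C) (i : Fin r) : (ns i : ℝ)⁻¹ ≤ K / N := by
  have hi : (0 : ℝ) < ns i := by exact_mod_cast (h.ne_zero i).bot_lt
  rw [inv_eq_one_div, div_le_div_iff₀ hi h.pos, one_mul]
  exact h.le_mul i

theorem abs_sum_jackCoeff_mul_inv_pow_le (h : IsAdmissible ns N K C) (hK : 0 ≤ K) (j : ℕ) :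
    |∑ i, jackCoeff ns i * (ns i : ℝ)⁻¹ ^ j| ≤ C * (K / N) ^ j := by
  have := h.pos
  refine h.abs_sum_jackCoeff_mul_le (by positivity) fun i => ?_
  rw [abs_of_nonneg (by positivity)]
  exact pow_le_pow_left₀ (by positivity) (h.inv_le i) j

end IsAdmissible

/-- The expectation at success probability `p` of the jackknife estimator of `f p`. -/
noncomputable def jackMean (ns : Fin r → ℕ) (f : ℝ → ℝ) (p : ℝ) : ℝ :=
  ∑ i, jackCoeff ns i * bernstein' (ns i) f p

theorem jackMean_sub (ns : Fin r → ℕ) (f g : ℝ → ℝ) (p : ℝ) :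
    jackMean ns (fun x => f x - g x) p = jackMean ns f p - jackMean ns g p := by
  simp only [jackMean, bernstein'_sub, mul_sub, Finset.sum_sub_distrib]

theorem jackMean_sum_mul {ι : Type*} (s : Finset ι) (c : ι → ℝ) (G : ι → ℝ → ℝ) (p : ℝ) :
    jackMean ns (fun x => ∑ i ∈ s, c i * G i x) p = ∑ i ∈ s, c i * jackMean ns (G i) p := by
  simp only [jackMean, bernstein'_sum_mul, Finset.mul_sum]
  rw [Finset.sum_comm]
  simp only [mul_left_comm]

theorem bernstein'_sub_pow_eq_sum {m s D : ℕ} (hm : m ≠ 0) (hs : s < D) (p : ℝ) :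
    bernstein' m (fun x => (x - p) ^ s) p =
      ∑ l ∈ Finset.range D, p ^ l * (momentCoeff s l).eval p * (m : ℝ)⁻¹ ^ (s - l) := by
  have : (m : ℝ) ≠ 0 := Nat.cast_ne_zero.2 hm
  rw [bernstein'_sub_pow hm, binomMoment_eq_sum m hs, Polynomial.eval_finsetSum, Finset.sum_div]
  refine Finset.sum_congr rfl fun l _ => ?_
  simp only [Polynomial.eval_mul, Polynomial.eval_pow, Polynomial.eval_natCast, Polynomial.eval_X]
  rcases le_or_gt l s with hls | hls
  · obtain ⟨e, rfl⟩ := Nat.exists_eq_add_of_le hls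
    rw [Nat.add_sub_cancel_left, pow_add, inv_pow, mul_pow]
    field_simp
  · simp [momentCoeff_eq_zero (show s < 2 * l by omega)]

theorem jackMean_sub_pow_eq_sum (hpos : ∀ i, ns i ≠ 0) {s D : ℕ} (hs : s < D) (p : ℝ) :
    jackMean ns (fun x => (x - p) ^ s) p = ∑ l ∈ Finset.range D, p ^ l * (momentCoeff s l).eval p *
      ∑ i, jackCoeff ns i * (ns i : ℝ)⁻¹ ^ (s - l) := by
  simp only [jackMean, bernstein'_sub_pow_eq_sum (hpos _) hs, Finset.mul_sum]
  rw [Finset.sum_comm]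
  simp only [mul_left_comm]

theorem jackMean_one (hinj : Function.Injective ns) (hpos : ∀ i, ns i ≠ 0) (hr : r ≠ 0) (p : ℝ) :
    jackMean ns (fun _ => 1) p = 1 := by
  have hone := jackMean_sub_pow_eq_sum hpos (s := 0) zero_lt_one p
  simpa [momentCoeff, by simpa using sum_jackCoeff_mul_inv_pow hinj hpos hr.bot_lt] using hone

theorem eval_momentCoeff_mul_sum_jackCoeff_eq_zero (hinj : Function.Injective ns)
    (hpos : ∀ i, ns i ≠ 0) {s l : ℕ} (hs : s ≠ 0) (hsl : s < l + r ∨ l = 0) (p : ℝ) :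
    (momentCoeff s l).eval p * ∑ i, jackCoeff ns i * (ns i : ℝ)⁻¹ ^ (s - l) = 0 := by
  rcases lt_or_ge s (2 * l) with hl | hl
  · rw [momentCoeff_eq_zero hl, Polynomial.eval_zero, zero_mul]
  rcases Nat.eq_zero_or_pos l with rfl | hl0
  · obtain ⟨s, rfl⟩ := Nat.exists_eq_succ_of_ne_zero hs
    rw [momentCoeff_succ_zero, Polynomial.eval_zero, zero_mul]
  · rw [sum_jackCoeff_mul_inv_pow hinj hpos (by omega), if_neg (by omega), mul_zero]

theorem jackMean_sub_pow_eq_zero (hinj : Function.Injective ns) (hpos : ∀ i, ns i ≠ 0) {s : ℕ}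
    (hs : s ≠ 0) (hsr : s ≤ r) (p : ℝ) : jackMean ns (fun x => (x - p) ^ s) p = 0 := by
  rw [jackMean_sub_pow_eq_sum hpos s.lt_succ_self]
  refine Finset.sum_eq_zero fun l _ => ?_
  rw [mul_assoc, eval_momentCoeff_mul_sum_jackCoeff_eq_zero hinj hpos hs (by omega), mul_zero]

theorem pow_mul_div_pow_le {K N p q : ℝ} (hK : 1 ≤ K) (hp : 0 ≤ p) (hpq : p ≤ q) (hN : 0 < N)
    (hNq : 1 ≤ N * q) {l e D : ℕ} (hD : r + e ≤ D) :
    p ^ l * (K / N) ^ (r + e) ≤ K ^ D * (q ^ (l + e) / N ^ r) := by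
  have hq : 0 < q := pos_of_mul_pos_right (zero_lt_one.trans_le hNq) hN.le
  have hinv : N⁻¹ ≤ q := (inv_le_iff_one_le_mul₀ hN).2 (by linarith)
  calc p ^ l * (K / N) ^ (r + e) = K ^ (r + e) * (p ^ l * N⁻¹ ^ e / N ^ r) := by
        rw [div_pow, pow_add N, inv_pow]
        field_simp
    _ ≤ K ^ D * (q ^ l * q ^ e / N ^ r) := by gcongr
    _ = _ := by rw [pow_add]

theorem exists_abs_jackMean_sub_pow_le (r : ℕ) {K C : ℝ} (hK : 1 ≤ K) (hC : 0 ≤ C) :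
    ∃ c, 0 ≤ c ∧ ∀ (ns : Fin r → ℕ) (N p q : ℝ), IsAdmissible ns N K C → p ∈ Set.Icc 0 1 →
      p ≤ q → 1 ≤ N * q → ∀ s, r < s → s < 2 * r →
        |jackMean ns (fun x => (x - p) ^ s) p| ≤ c * (q ^ (s - r) / N ^ r) := by
  obtain ⟨a, ha1, ha⟩ := exists_abs_eval_momentCoeff_le (2 * r)
  refine ⟨(2 * r : ℕ) * (a * C * K ^ (2 * r)), by positivity, ?_⟩
  intro ns N p q hns hp hpq hNq s hrs hs
  have hq : 0 ≤ q := hp.1.trans hpq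
  have hp0 := hp.1
  have hN := hns.pos
  have hterm : ∀ l ∈ Finset.range (2 * r), |p ^ l * (momentCoeff s l).eval p *
      ∑ i, jackCoeff ns i * (ns i : ℝ)⁻¹ ^ (s - l)| ≤
        a * C * K ^ (2 * r) * (q ^ (s - r) / N ^ r) := by
    intro l hl
    by_cases hsl : s < l + r
    · rw [mul_assoc, eval_momentCoeff_mul_sum_jackCoeff_eq_zero hns.injective hns.ne_zero
        (by omega) (.inl hsl), mul_zero, abs_zero]
      positivity
    obtain ⟨e, he⟩ : ∃ e, s = l + (r + e) := ⟨s - l - r, by omega⟩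
    have hre : r + e ≤ 2 * r := by omega
    have hsum := hns.abs_sum_jackCoeff_mul_inv_pow_le (by linarith) (s - l)
    rw [show s - l = r + e by omega] at hsum ⊢
    rw [show s - r = l + e by omega, abs_mul, abs_mul, abs_of_nonneg (by positivity)]
    calc p ^ l * |(momentCoeff s l).eval p| * |∑ i, jackCoeff ns i * (ns i : ℝ)⁻¹ ^ (r + e)|
        ≤ p ^ l * a * (C * (K / N) ^ (r + e)) := by
          gcongr
          exact ha s hs l (Finset.mem_range.1 hl) p hp
      _ = a * C * (p ^ l * (K / N) ^ (r + e)) := by ring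
      _ ≤ a * C * (K ^ (2 * r) * (q ^ (l + e) / N ^ r)) :=
          mul_le_mul_of_nonneg_left (pow_mul_div_pow_le hK hp0 hpq hN hNq hre) (by positivity)
      _ = _ := by ring
  rw [jackMean_sub_pow_eq_sum hns.ne_zero hs]
  refine (Finset.abs_sum_le_sum_abs _ _).trans ((Finset.sum_le_card_nsmul _ _ _ hterm).trans_eq ?_)
  rw [Finset.card_range, nsmul_eq_mul]
  ring

theorem jackMean_eval_sub_eval (hinj : Function.Injective ns) (hpos : ∀ i, ns i ≠ 0) (hr : r ≠ 0)
    {P : Polynomial ℝ} {D : ℕ} (hD : P.natDegree < D) (p : ℝ) :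
    jackMean ns (fun x => P.eval x) p - P.eval p = ∑ s ∈ Finset.Ioo r D,
      (Polynomial.taylor p P).coeff s * jackMean ns (fun x => (x - p) ^ s) p := by
  have hmean : jackMean ns (fun x => P.eval x) p = ∑ s ∈ Finset.range D,
      (Polynomial.taylor p P).coeff s * jackMean ns (fun x => (x - p) ^ s) p := by
    simp only [eval_eq_sum_taylor_coeff hD p, jackMean_sum_mul]
  have hconst : (Polynomial.taylor p P).coeff 0 * jackMean ns (fun x => (x - p) ^ 0) p =
      P.eval p := by
    simp only [pow_zero, jackMean_one hinj hpos hr, mul_one, Polynomial.taylor_coeff_zero]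
  rw [hmean, ← hconst, ← Finset.sum_erase_eq_sub (Finset.mem_range.2 (Nat.zero_lt_of_lt hD))]
  refine (Finset.sum_subset (fun s hs => ?_) fun s hs hsr => ?_).symm
  · have := Finset.mem_Ioo.1 hs
    exact Finset.mem_erase.2 ⟨by omega, Finset.mem_range.2 this.2⟩
  · rw [Finset.mem_erase, Finset.mem_range] at hs
    rw [Finset.mem_Ioo, not_and'] at hsr
    rw [jackMean_sub_pow_eq_zero hinj hpos hs.1 (not_lt.1 (hsr hs.2)), mul_zero]

theorem exists_abs_jackMean_eval_sub_eval_le (hr : r ≠ 0) {K C : ℝ} (hK : 1 ≤ K) (hC : 0 ≤ C) :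
    ∃ c, 0 ≤ c ∧ ∀ (ns : Fin r → ℕ) (N p q B : ℝ) (P : Polynomial ℝ), IsAdmissible ns N K C →
      p ∈ Set.Icc 0 1 → p ≤ q → 1 ≤ N * q → P.natDegree < 2 * r →
      (∀ s, r < s → s < 2 * r → |(Polynomial.taylor p P).coeff s| * q ^ (s - r) ≤ B * N ^ r) →
        |jackMean ns (fun x => P.eval x) p - P.eval p| ≤ c * B := by
  obtain ⟨c, hc0, hc⟩ := exists_abs_jackMean_sub_pow_le r hK hC
  refine ⟨(Finset.Ioo r (2 * r)).card * c, by positivity, ?_⟩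
  intro ns N p q B P hns hp hpq hNq hP hcoeff
  have hN := hns.pos
  have hterm : ∀ s ∈ Finset.Ioo r (2 * r),
      |(Polynomial.taylor p P).coeff s * jackMean ns (fun x => (x - p) ^ s) p| ≤ c * B := by
    intro s hs
    have ⟨hrs, hsr⟩ := Finset.mem_Ioo.1 hs
    calc _ ≤ |(Polynomial.taylor p P).coeff s| * (c * (q ^ (s - r) / N ^ r)) := by
          rw [abs_mul]
          gcongr
          exact hc ns N p q hns hp hpq hNq s hrs hsr
      _ = c * (|(Polynomial.taylor p P).coeff s| * q ^ (s - r) / N ^ r) := by ring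
      _ ≤ c * B := by
          gcongr
          exact (div_le_iff₀ (by positivity)).2 (hcoeff s hrs hsr)
  rw [jackMean_eval_sub_eval hns.injective hns.ne_zero hr hP]
  refine (Finset.abs_sum_le_sum_abs _ _).trans ((Finset.sum_le_card_nsmul _ _ _ hterm).trans_eq ?_)
  rw [nsmul_eq_mul, mul_assoc]

end Jackknife

section LocalApproximation

open Polynomial

/-- Forward differences of `f` of order `2 * r` on `[0, 7 / 8]` are bounded by `W` for all steps
small compared with `√(u / N)`, where `u` is the centre of the difference. -/
def DiffBound (r : ℕ) (f : ℝ → ℝ) (N W : ℝ) : Prop :=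
  ∀ x v : ℝ, 0 ≤ x → 0 < v → x + 2 * r * v ≤ 7 / 8 → v ^ 2 ≤ (x + r * v) / (8 * N) →
    |(fwdDiff v)^[2 * r] f x| ≤ W

/-- `P` approximates `f` at the scale `√(q / N)` of `q`, with polynomially growing error, on the
part of `[0, 3 / 4]` where differences with steps of that order are controlled by `DiffBound`. -/
structure IsLocalApprox (r : ℕ) (f : ℝ → ℝ) (N W q : ℝ) (P : ℝ[X]) : Prop where
  natDegree_lt : P.natDegree < 2 * r
  abs_sub_eval_le : ∀ x ∈ Set.Icc (0 : ℝ) (3 / 4), q ≤ 2 * x + 1 / N →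
    |f x - P.eval x| ≤ W * (1 + scaledSqDist N q x ^ r)

variable {r : ℕ} {f : ℝ → ℝ} {N W q x : ℝ}

theorem sq_le_div_of_le_sqrt {v : ℝ} (hr : r ≠ 0) (hN : 0 < N) (hq : 0 ≤ q) (hx : 0 ≤ x)
    (hqx : q ≤ 2 * x + 1 / N) (hv0 : 0 < v) (hv : 16 * v ≤ √(q / N)) :
    v ^ 2 ≤ (x + r * v) / (8 * N) := by
  have hr1 : (1 : ℝ) ≤ r := by exact_mod_cast hr.bot_lt
  have hsq : (16 * v * N) ^ 2 ≤ 2 * x * N + 1 := by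
    have := pow_le_pow_left₀ (by positivity) hv 2
    rw [Real.sq_sqrt (by positivity), le_div_iff₀ hN] at this
    calc (16 * v * N) ^ 2 = (16 * v) ^ 2 * N * N := by ring
      _ ≤ (2 * x + 1 / N) * N := by gcongr; exact this.trans hqx
      _ = 2 * x * N + 1 := by field_simp
  have hxN : 0 ≤ x * N := by positivity
  have hkey : (16 * v * N) ^ 2 ≤ 32 * (x * N) + 2 * (16 * v * N) := by
    rcases le_total (16 * v * N) 2 with hw | hw
    · have : 0 ≤ 16 * v * N := by positivity
      nlinarith
    · nlinarith
  rw [le_div_iff₀ (by positivity)]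
  have hle : v ^ 2 * (8 * N) * (32 * N) ≤ (x + v) * (32 * N) := by linarith
  have := le_of_mul_le_mul_right hle (by positivity)
  nlinarith

theorem DiffBound.abs_fwdDiff_le (h : DiffBound r f N W) (hr : r ≠ 0) (hN : 0 < N)
    (hNq : 1 ≤ N * q) (hq : q ≤ 1 / 2) (hx : x ∈ Set.Icc (0 : ℝ) (3 / 4))
    (hqx : q ≤ 2 * x + 1 / N) {v : ℝ} (hv : v ∈ Set.Ioc 0 (√(q / N) / (16 * r))) :
    |(fwdDiff v)^[2 * r] f x| ≤ W := by
  have hr1 : (1 : ℝ) ≤ r := by exact_mod_cast hr.bot_lt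
  have hscale : √(q / N) ≤ 1 := by
    rw [Real.sqrt_le_one, div_le_one hN]
    nlinarith
  have hrv : v * (16 * r) ≤ √(q / N) := (le_div_iff₀ (by positivity)).1 hv.2
  have h16v : 16 * v ≤ √(q / N) := by nlinarith [hv.1]
  exact h x v hx.1 hv.1 (by linarith [hx.2]) <|
    sq_le_div_of_le_sqrt hr hN (pos_of_mul_pos_right (zero_lt_one.trans_le hNq) hN.le).le hx.1 hqx
      hv.1 h16v

theorem DiffBound.exists_isLocalApprox (h : DiffBound r f N W) (hr : r ≠ 0) (hf : Continuous f)
    (hN : 0 < N) (hW : 0 ≤ W) (hNq : 1 ≤ N * q) (hq : q ≤ 1 / 2) :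
    ∃ P, IsLocalApprox r f N ((64 * r ^ 2) ^ (2 * r) * W) q P := by
  have hq0 : 0 < q := pos_of_mul_pos_right (zero_lt_one.trans_le hNq) hN.le
  have hr1 : (1 : ℝ) ≤ r := by exact_mod_cast hr.bot_lt
  have hk : 2 * r ≠ 0 := by omega
  set ρ := √(q / N) with hρ
  set δ := ρ / (32 * r ^ 2) with hδ
  have hδ0 : 0 < δ := by positivity
  have hdiff {y : ℝ} (hy : y ∈ Set.Icc (0 : ℝ) (3 / 4)) (hqy : q ≤ 2 * y + 1 / N) :
      ∀ v ∈ Set.Ioc 0 ((2 * r : ℕ) * δ), |(fwdDiff v)^[2 * r] f y| ≤ W := by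
    have : (2 * r : ℕ) * δ = ρ / (16 * r) := by
      rw [hδ]
      push_cast
      field_simp
      ring
    rw [this]
    exact fun v hv => h.abs_fwdDiff_le hr hN hNq hq hy hqy hv
  refine ⟨taylorPolynomial (2 * r) (steklovMean (2 * r) δ f) q,
    natDegree_taylorPolynomial_lt hk.bot_lt _ _, fun x hx hqx => ?_⟩
  have hsmooth := abs_sub_steklovMean_le hk hf hδ0 (hdiff hx hqx)
  have htaylor := abs_sub_eval_taylorPolynomial_le (q := q) (x := x)
    (contDiff_steklovMean hf hδ0.ne' (2 * r)) fun y hy =>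
      abs_iteratedDeriv_steklovMean_le hf hδ0 hW <| hdiff
        ⟨(le_min hq0.le hx.1).trans hy.1, hy.2.trans (max_le (by linarith) hx.2)⟩ <| by
          have := (one_div_pos.2 hN).le
          rcases min_le_iff.1 hy.1 with hqy | hxy <;> linarith
  have hremainder : 2 ^ (2 * r) * (W / δ ^ (2 * r)) * |x - q| ^ (2 * r) =
      (64 * r ^ 2) ^ (2 * r) * W * scaledSqDist N q x ^ r := by
    rw [scaledSqDist, show (64 * r ^ 2 : ℝ) = 2 * (32 * r ^ 2) by ring, mul_pow 2, hδ, div_pow ρ,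
      pow_mul ρ, hρ, Real.sq_sqrt (by positivity), pow_mul |x - q|, sq_abs, mul_pow (_ ^ 2),
      div_pow q, div_pow N]
    field_simp
  have hconst : (1 : ℝ) ≤ (64 * r ^ 2) ^ (2 * r) := one_le_pow₀ (by nlinarith)
  rw [hremainder] at htaylor
  calc _ ≤ _ := abs_sub_le _ _ _
    _ ≤ W + (64 * r ^ 2) ^ (2 * r) * W * scaledSqDist N q x ^ r := add_le_add hsmooth htaylor
    _ ≤ _ := by rw [mul_one_add]; gcongr; exact le_mul_of_one_le_left hW hconst

end LocalApproximation

section GlobalApproximation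

open Polynomial

/-- `P` approximates `f` on all of `[0, 1]` up to polynomial growth of the error away from `q`, and
its Taylor coefficients of order above `r` on `[0, q]` have the size seen at scale `q`. -/
structure IsGlobalApprox (r : ℕ) (f : ℝ → ℝ) (N W q : ℝ) (P : ℝ[X]) : Prop where
  natDegree_lt : P.natDegree < 2 * r
  abs_sub_eval_le : ∀ x ∈ Set.Icc (0 : ℝ) 1,
    |f x - P.eval x| ≤ W * (1 + scaledSqDist N q x ^ (2 * r))
  abs_coeff_le : ∀ y ∈ Set.Icc 0 q, ∀ s, r < s → s < 2 * r →
    |(taylor y P).coeff s| * q ^ (s - r) ≤ W * N ^ r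

variable {r k s : ℕ} {f : ℝ → ℝ} {c N W q x y : ℝ} {P Q : ℝ[X]}

theorem IsMarkovConst.abs_taylor_coeff_sub_le {a L B : ℝ} (hc : IsMarkovConst k c)
    (hP : P.natDegree < k) (hQ : Q.natDegree < k) (hL : 0 < L)
    (hfP : ∀ x ∈ Set.Icc a (a + L), |f x - P.eval x| ≤ B)
    (hfQ : ∀ x ∈ Set.Icc a (a + L), |f x - Q.eval x| ≤ B) (hs : s < k) (hy : |y - a| ≤ 2 * L) :
    |(taylor y P).coeff s - (taylor y Q).coeff s| * L ^ s ≤ c * (2 * B) := by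
  rw [← coeff_sub, ← map_sub]
  refine hc (P - Q) ((natDegree_sub_le _ _).trans_lt (max_lt hP hQ)) a L _ hL (fun x hx => ?_)
    s hs y hy
  rw [eval_sub]
  calc _ ≤ |P.eval x - f x| + |f x - Q.eval x| := abs_sub_le _ _ _
    _ ≤ B + B := add_le_add ((abs_sub_comm _ _).trans_le (hfP x hx)) (hfQ x hx)
    _ = 2 * B := (two_mul B).symm

theorem scaledSqDist_le_mul {p : ℝ} (hN : 0 ≤ N) (hq : 0 < q) (hqp : q ≤ p) (hx : |x - p| ≤ q) :
    scaledSqDist N p x ≤ N * q := by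
  have hp : 0 < p := hq.trans_le hqp
  calc scaledSqDist N p x ≤ q ^ 2 * (N / q) := by
        rw [scaledSqDist, ← sq_abs]
        gcongr
    _ = N * q := by field_simp

namespace IsLocalApprox

theorem abs_sub_eval_le_two_mul (h : IsLocalApprox r f N W q P) (hW : 0 ≤ W)
    (hx : x ∈ Set.Icc (0 : ℝ) (3 / 4)) (hqx : q ≤ 2 * x + 1 / N) {b : ℝ} (hb : 1 ≤ b)
    (hD : scaledSqDist N q x ^ r ≤ b) : |f x - P.eval x| ≤ 2 * W * b := by
  calc _ ≤ W * (1 + scaledSqDist N q x ^ r) := h.abs_sub_eval_le x hx hqx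
    _ ≤ W * (b + b) := by gcongr
    _ = _ := by ring

theorem abs_sub_eval_le_of_abs_sub_le {p : ℝ} (h : IsLocalApprox r f N W p P) (hN : 0 < N)
    (hW : 0 ≤ W) (hNq : 1 ≤ N * q) (hqp : q ≤ p) (hx : x ∈ Set.Icc (0 : ℝ) (3 / 4))
    (hpx : p ≤ 2 * x + 1 / N) (hxp : |x - p| ≤ q) : |f x - P.eval x| ≤ 2 * W * (N * q) ^ r := by
  have hq0 : 0 < q := pos_of_mul_pos_right (zero_lt_one.trans_le hNq) hN.le
  have hp0 : 0 < p := hq0.trans_le hqp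
  exact h.abs_sub_eval_le_two_mul hW hx hpx (one_le_pow₀ hNq) <|
    pow_le_pow_left₀ (scaledSqDist_nonneg (by positivity))
      (scaledSqDist_le_mul hN.le hq0 hqp hxp) r

theorem abs_sub_eval_le_of_scale_one_div (h : IsLocalApprox r f N W (1 / N) P) (hN : 0 < N)
    (hW : 0 ≤ W) (hNq : 1 ≤ N * q) (hq : q ≤ 1 / 2) (hx : x ∈ Set.Icc 0 q) :
    |f x - P.eval x| ≤ 2 * W * (N * q) ^ (2 * r) := by
  have hinv : 0 < 1 / N := one_div_pos.2 hN
  refine h.abs_sub_eval_le_two_mul hW ⟨hx.1, by linarith [hx.2]⟩ (by linarith [hx.1])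
    (one_le_pow₀ hNq) ?_
  rw [pow_mul]
  refine pow_le_pow_left₀ (scaledSqDist_nonneg (by positivity)) ?_ r
  have hNinv : 1 / N ≤ q := (div_le_iff₀ hN).2 (by linarith)
  rw [scaledSqDist, show N / (1 / N) = N ^ 2 by field_simp, mul_pow, mul_comm]
  gcongr ?_ * ?_
  exact sq_le_sq.2 <| (abs_le.2 ⟨by linarith [hx.1], by linarith [hx.2]⟩).trans (le_abs_self q)

theorem abs_eval_le (h : IsLocalApprox r f N W q P) (hN : 0 < N) (hW : 0 ≤ W) (hNq : 1 ≤ N * q)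
    (hq : q ≤ 1 / 2) (hf : ∀ x ∈ Set.Icc (0 : ℝ) 1, |f x| ≤ W * N ^ r)
    (hx : x ∈ Set.Icc (1 / 2 : ℝ) (1 / 2 + 1 / 4)) : |P.eval x| ≤ 3 * W * (N / q) ^ r := by
  have hq0 : 0 < q := pos_of_mul_pos_right (zero_lt_one.trans_le hNq) hN.le
  have hNdiv : N ≤ N / q := le_div_self hN.le hq0 (by linarith)
  have hx' : x ∈ Set.Icc (0 : ℝ) (3 / 4) := ⟨by linarith [hx.1], by linarith [hx.2]⟩
  have hD : scaledSqDist N q x ≤ N / q :=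
    mul_le_of_le_one_left (by positivity) (by nlinarith [hx.1, hx.2])
  have hsub : |f x - P.eval x| ≤ 2 * W * (N / q) ^ r :=
    h.abs_sub_eval_le_two_mul hW hx' (by linarith [hx.1, one_div_pos.2 hN])
      (one_le_pow₀ (by nlinarith)) (pow_le_pow_left₀ (scaledSqDist_nonneg (by positivity)) hD r)
  have hfx : |f x| ≤ W * (N / q) ^ r :=
    (hf x ⟨hx'.1, by linarith [hx'.2]⟩).trans (by gcongr)
  have := abs_sub_abs_le_abs_sub (P.eval x) (f x)
  rw [abs_sub_comm] at this
  linarith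

theorem abs_taylor_coeff_le (h : IsLocalApprox r f N W q P) (hc : IsMarkovConst (2 * r) c)
    (hN : 0 < N) (hW : 0 ≤ W) (hNq : 1 ≤ N * q) (hq : q ≤ 1 / 2)
    (hf : ∀ x ∈ Set.Icc (0 : ℝ) 1, |f x| ≤ W * N ^ r) (hs : s < 2 * r)
    (hy : y ∈ Set.Icc (0 : ℝ) 1) :
    |(taylor y P).coeff s| * (1 / 4) ^ s ≤ c * (3 * W * (N / q) ^ r) :=
  hc P h.natDegree_lt (1 / 2) (1 / 4) _ (by norm_num)
    (fun _ hx => h.abs_eval_le hN hW hNq hq hf hx) s hs y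
    (abs_le.2 ⟨by linarith [hy.1], by linarith [hy.2]⟩)

theorem abs_taylor_coeff_le_of_quarter_le (h : IsLocalApprox r f N W q P)
    (hc : IsMarkovConst (2 * r) c) (hc0 : 0 ≤ c) (hN : 0 < N) (hW : 0 ≤ W) (hNq : 1 ≤ N * q)
    (hq : q ∈ Set.Icc (1 / 4 : ℝ) (1 / 2)) (hf : ∀ x ∈ Set.Icc (0 : ℝ) 1, |f x| ≤ W * N ^ r)
    (hs : s < 2 * r) (hy : y ∈ Set.Icc (0 : ℝ) 1) (e : ℕ) :
    |(taylor y P).coeff s| * q ^ e ≤ 3 * 64 ^ r * c * W * N ^ r := by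
  have hq0 : 0 < q := by linarith [hq.1]
  have hNdiv : N / q ≤ 4 * N := by
    rw [div_le_iff₀ hq0]
    nlinarith [hq.1]
  calc |(taylor y P).coeff s| * q ^ e ≤ |(taylor y P).coeff s| :=
        mul_le_of_le_one_right (abs_nonneg _) (pow_le_one₀ hq0.le (by linarith [hq.2]))
    _ = |(taylor y P).coeff s| * (1 / 4) ^ s * 4 ^ s := by
        rw [mul_assoc, ← mul_pow, show (1 / 4 * 4 : ℝ) = 1 by norm_num, one_pow, mul_one]
    _ ≤ c * (3 * W * (4 * N) ^ r) * 4 ^ (2 * r) := by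
        have hcoeff := (h.abs_taylor_coeff_le hc hN hW hNq hq.2 hf hs hy).trans
          (by gcongr : _ ≤ c * (3 * W * (4 * N) ^ r))
        exact mul_le_mul hcoeff (pow_le_pow_right₀ (by norm_num) hs.le) (by positivity)
          (by positivity)
    _ = 3 * 64 ^ r * c * W * N ^ r := by
        rw [mul_pow, pow_mul, show (64 : ℝ) = 4 * 4 ^ 2 by norm_num, mul_pow 4]
        ring

theorem abs_taylor_coeff_sub_double_le (h : IsLocalApprox r f N W q P)
    (h₂ : IsLocalApprox r f N W (2 * q) Q) (hc : IsMarkovConst (2 * r) c) (hN : 0 < N)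
    (hW : 0 ≤ W) (hNq : 1 ≤ N * q) (hq : q ≤ 1 / 4) (hrs : r ≤ s) (hs : s < 2 * r)
    (hy : y ∈ Set.Icc 0 q) :
    |(taylor y P).coeff s - (taylor y Q).coeff s| * q ^ (s - r) ≤ 4 * c * W * N ^ r := by
  have hq0 : 0 < q := pos_of_mul_pos_right (zero_lt_one.trans_le hNq) hN.le
  have hinv : 0 < 1 / N := one_div_pos.2 hN
  have hclose {p : ℝ} {R : ℝ[X]} (hR : IsLocalApprox r f N W p R) (hqp : q ≤ p)
      (hpq : p ≤ 2 * q) : ∀ x ∈ Set.Icc q (q + q), |f x - R.eval x| ≤ 2 * W * (N * q) ^ r :=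
    fun x hx => hR.abs_sub_eval_le_of_abs_sub_le hN hW hNq hqp
      ⟨by linarith [hx.1], by linarith [hx.2]⟩ (by linarith [hx.1])
      (abs_le.2 ⟨by linarith [hx.1], by linarith [hx.2]⟩)
  have hcoeff := hc.abs_taylor_coeff_sub_le h.natDegree_lt h₂.natDegree_lt hq0
    (hclose h le_rfl (by linarith)) (hclose h₂ (by linarith) le_rfl) hs (y := y)
    (abs_le.2 ⟨by linarith [hy.1], by linarith [hy.2]⟩)
  rw [← Nat.sub_add_cancel hrs, pow_add, Nat.sub_add_cancel hrs] at hcoeff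
  refine le_of_mul_le_mul_right ?_ (pow_pos hq0 r)
  calc _ ≤ _ := (mul_assoc _ _ _).trans_le hcoeff
    _ = _ := by rw [mul_pow]; ring

end IsLocalApprox

/-- Passing from scale `2 * q` down to `q` divides the weight `q ^ e` by at least `2`, which makes
room for the new error `A / 2`. -/
theorem abs_mul_pow_le_of_dyadic {a : ℝ → ℝ} {e : ℕ} {q₀ A : ℝ} (he : e ≠ 0) (hq₀ : 0 < q₀)
    (hbase : ∀ q ∈ Set.Icc q₀ (1 / 2), 1 / 4 ≤ q → |a q| * q ^ e ≤ A)
    (hstep : ∀ q ∈ Set.Icc q₀ (1 / 4), |a q - a (2 * q)| * q ^ e ≤ A / 2) :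
    ∀ q ∈ Set.Icc q₀ (1 / 2), |a q| * q ^ e ≤ A := by
  have hdescent (i : ℕ) : ∀ q ∈ Set.Icc q₀ (1 / 2), 1 / 4 ≤ 2 ^ i * q → |a q| * q ^ e ≤ A := by
    induction i with
    | zero => exact fun q hq hqi => hbase q hq (by linarith)
    | succ i ih =>
      intro q hq hqi
      rcases le_total (1 / 4) q with hq4 | hq4
      · exact hbase q hq hq4
      have hq0 : 0 < q := hq₀.trans_le hq.1
      have hdouble : |a (2 * q)| * (2 * q) ^ e ≤ A :=
        ih _ ⟨by linarith [hq.1], by linarith⟩ (by rw [pow_succ] at hqi; linarith)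
      have htwo : (2 : ℝ) ≤ 2 ^ e := le_self_pow₀ one_le_two he
      have hhalf : |a (2 * q)| * q ^ e ≤ A / 2 := by
        have : 0 ≤ |a (2 * q)| * q ^ e := by positivity
        rw [mul_pow] at hdouble
        nlinarith
      calc |a q| * q ^ e ≤ (|a q - a (2 * q)| + |a (2 * q)|) * q ^ e := by
            gcongr
            simpa using abs_sub_le (a q) (a (2 * q)) 0
        _ ≤ A / 2 + A / 2 := by
            rw [add_mul]
            exact add_le_add (hstep q ⟨hq.1, hq4⟩) hhalf
        _ = A := add_halves A
  intro q hq
  have hq0 : 0 < q := hq₀.trans_le hq.1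
  obtain ⟨i, hi⟩ := pow_unbounded_of_one_lt (1 / 4 / q) one_lt_two
  exact hdescent i q hq ((div_lt_iff₀ hq0).1 hi).le

theorem abs_taylor_coeff_le_of_isLocalApprox {P : ℝ → ℝ[X]} (hN : 0 < N) (hNq : 1 ≤ N * q)
    (hq : q ≤ 1 / 2) (hP : ∀ p, q ≤ p → p ≤ 1 / 2 → IsLocalApprox r f N W p (P p))
    (hc : IsMarkovConst (2 * r) c) (hc0 : 0 ≤ c) (hW : 0 ≤ W)
    (hf : ∀ x ∈ Set.Icc (0 : ℝ) 1, |f x| ≤ W * N ^ r) (hrs : r < s) (hs : s < 2 * r)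
    (hy : y ∈ Set.Icc 0 q) :
    |(taylor y (P q)).coeff s| * q ^ (s - r) ≤ 3 * 64 ^ r * c * W * N ^ r := by
  have hq0 : 0 < q := pos_of_mul_pos_right (zero_lt_one.trans_le hNq) hN.le
  have hNp {p : ℝ} (hp : q ≤ p) : 1 ≤ N * p := hNq.trans (by gcongr)
  refine abs_mul_pow_le_of_dyadic (a := fun p => (taylor y (P p)).coeff s) (by omega) hq0
    (fun p hp hp4 => ?_) (fun p hp => ?_) q ⟨le_rfl, hq⟩
  · exact (hP p hp.1 hp.2).abs_taylor_coeff_le_of_quarter_le hc hc0 hN hW (hNp hp.1) ⟨hp4, hp.2⟩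
      hf hs ⟨hy.1, by linarith [hy.2]⟩ _
  · refine ((hP p hp.1 (by linarith [hp.2])).abs_taylor_coeff_sub_double_le
      (hP (2 * p) (by linarith [hp.1]) (by linarith [hp.2])) hc hN hW (hNp hp.1) hp.2 hrs.le hs
      ⟨hy.1, hy.2.trans hp.1⟩).trans ?_
    have h64 : (64 : ℝ) ≤ 64 ^ r := le_self_pow₀ (by norm_num) (by omega)
    have : 0 ≤ c * W * N ^ r := by positivity
    nlinarith

namespace IsLocalApprox

theorem abs_sub_eval_le_of_lt_half (h : IsLocalApprox r f N W q P)
    (hQ : IsLocalApprox r f N W (1 / N) Q) (hr : r ≠ 0) (hc : IsMarkovConst (2 * r) c)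
    (hc1 : 1 ≤ c) (hN : 0 < N) (hW : 0 ≤ W) (hNq : 1 ≤ N * q) (hq : q ≤ 1 / 2)
    (hx : x ∈ Set.Ico 0 (q / 2)) :
    |f x - P.eval x| ≤ 6 * 16 ^ r * c * W * (1 + scaledSqDist N q x ^ (2 * r)) := by
  have hq0 : 0 < q := pos_of_mul_pos_right (zero_lt_one.trans_le hNq) hN.le
  have hinv : 0 < 1 / N := one_div_pos.2 hN
  have hPclose : ∀ z ∈ Set.Icc (q / 2) (q / 2 + q / 2),
      |f z - P.eval z| ≤ 2 * W * (N * q) ^ (2 * r) := fun z hz =>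
    (h.abs_sub_eval_le_of_abs_sub_le hN hW hNq le_rfl ⟨by linarith [hz.1], by linarith [hz.2]⟩
      (by linarith [hz.1]) (abs_le.2 ⟨by linarith [hz.1], by linarith [hz.2]⟩)).trans
        (by gcongr ?_ * ?_; exact pow_le_pow_right₀ hNq (by omega))
  have hQclose : ∀ z ∈ Set.Icc 0 q, |f z - Q.eval z| ≤ 2 * W * (N * q) ^ (2 * r) := fun z hz =>
    hQ.abs_sub_eval_le_of_scale_one_div hN hW hNq hq hz
  have hPQ : |P.eval x - Q.eval x| ≤ c * (2 * (2 * W * (N * q) ^ (2 * r))) := by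
    simpa using hc.abs_taylor_coeff_sub_le h.natDegree_lt hQ.natDegree_lt (by linarith) hPclose
      (fun z hz => hQclose z ⟨by linarith [hz.1], by linarith [hz.2]⟩) (s := 0) (y := x) (by omega)
      (abs_le.2 ⟨by linarith [hx.1], by linarith [hx.2]⟩)
  have hfar : N * q ≤ 4 * scaledSqDist N q x := by
    rw [scaledSqDist, mul_div_assoc', mul_div_assoc', le_div_iff₀ hq0]
    have : q ^ 2 / 4 ≤ (x - q) ^ 2 := by nlinarith [hx.1, hx.2]
    nlinarith
  calc |f x - P.eval x| ≤ |f x - Q.eval x| + |P.eval x - Q.eval x| := by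
        rw [abs_sub_comm (P.eval x)]
        exact abs_sub_le _ _ _
    _ ≤ 1 * (2 * W * (N * q) ^ (2 * r)) + c * (2 * (2 * W * (N * q) ^ (2 * r))) := by
        rw [one_mul]
        exact add_le_add (hQclose x ⟨hx.1, by linarith [hx.2]⟩) hPQ
    _ ≤ c * (2 * W * (N * q) ^ (2 * r)) + c * (2 * (2 * W * (N * q) ^ (2 * r))) := by gcongr
    _ = 6 * c * W * (N * q) ^ (2 * r) := by ring
    _ ≤ 6 * c * W * (4 * scaledSqDist N q x) ^ (2 * r) := by gcongr
    _ = 6 * 16 ^ r * c * W * scaledSqDist N q x ^ (2 * r) := by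
        rw [mul_pow, pow_mul 4, show (4 : ℝ) ^ 2 = 16 by norm_num]
        ring
    _ ≤ _ := by gcongr; linarith

theorem abs_sub_eval_le_of_three_quarters_le (h : IsLocalApprox r f N W q P) (hr : r ≠ 0)
    (hc : IsMarkovConst (2 * r) c) (hc1 : 1 ≤ c) (hN : 0 < N) (hW : 0 ≤ W) (hNq : 1 ≤ N * q)
    (hq : q ≤ 1 / 2) (hf : ∀ x ∈ Set.Icc (0 : ℝ) 1, |f x| ≤ W * N ^ r)
    (hx : x ∈ Set.Icc (3 / 4 : ℝ) 1) :
    |f x - P.eval x| ≤ 4 * 16 ^ r * c * W * scaledSqDist N q x ^ r := by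
  have hq0 : 0 < q := pos_of_mul_pos_right (zero_lt_one.trans_le hNq) hN.le
  have hx' : x ∈ Set.Icc (0 : ℝ) 1 := ⟨by linarith [hx.1], hx.2⟩
  have hfx : |f x| ≤ 1 * (W * (N / q) ^ r) := by
    rw [one_mul]
    refine (hf x hx').trans ?_
    gcongr
    exact le_div_self hN.le hq0 (by linarith)
  have hPx : |P.eval x| ≤ c * (3 * W * (N / q) ^ r) := by
    simpa using h.abs_taylor_coeff_le hc hN hW hNq hq hf (s := 0) (by omega) hx'
  have hfar : N / q ≤ 16 * scaledSqDist N q x := by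
    rw [scaledSqDist, ← mul_assoc]
    exact le_mul_of_one_le_left (by positivity) (by nlinarith [hx.1])
  calc |f x - P.eval x| ≤ |f x| + |P.eval x| := abs_sub _ _
    _ ≤ c * (W * (N / q) ^ r) + c * (3 * W * (N / q) ^ r) :=
        add_le_add (hfx.trans (by gcongr)) hPx
    _ = 4 * c * W * (N / q) ^ r := by ring
    _ ≤ 4 * c * W * (16 * scaledSqDist N q x) ^ r := by gcongr
    _ = _ := by rw [mul_pow]; ring

theorem abs_sub_eval_le_of_mem_Icc (h : IsLocalApprox r f N W q P)
    (hQ : IsLocalApprox r f N W (1 / N) Q) (hr : r ≠ 0) (hc : IsMarkovConst (2 * r) c)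
    (hc1 : 1 ≤ c) (hN : 0 < N) (hW : 0 ≤ W) (hNq : 1 ≤ N * q) (hq : q ≤ 1 / 2)
    (hf : ∀ x ∈ Set.Icc (0 : ℝ) 1, |f x| ≤ W * N ^ r) (hx : x ∈ Set.Icc (0 : ℝ) 1) :
    |f x - P.eval x| ≤ 6 * 16 ^ r * c * W * (1 + scaledSqDist N q x ^ (2 * r)) := by
  have hq0 : 0 < q := pos_of_mul_pos_right (zero_lt_one.trans_le hNq) hN.le
  have hD : 0 ≤ scaledSqDist N q x := scaledSqDist_nonneg (by positivity)
  have hDr : scaledSqDist N q x ^ r ≤ 1 + scaledSqDist N q x ^ (2 * r) := by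
    rw [mul_comm 2 r, pow_mul]
    nlinarith [sq_nonneg (scaledSqDist N q x ^ r - 1)]
  rcases lt_or_ge x (q / 2) with hxq | hxq
  · exact h.abs_sub_eval_le_of_lt_half hQ hr hc hc1 hN hW hNq hq ⟨hx.1, hxq⟩
  rcases le_total x (3 / 4) with hx34 | hx34
  · have h16 : (1 : ℝ) ≤ 16 ^ r * c :=
      one_le_mul_of_one_le_of_one_le (one_le_pow₀ (by norm_num)) hc1
    calc |f x - P.eval x| ≤ W * (1 + scaledSqDist N q x ^ r) :=
          h.abs_sub_eval_le x ⟨hx.1, hx34⟩ (by linarith [one_div_pos.2 hN])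
      _ ≤ W * (6 * (1 + scaledSqDist N q x ^ (2 * r))) := by
          gcongr
          linarith [pow_nonneg hD (2 * r)]
      _ ≤ (16 ^ r * c) * (W * (6 * (1 + scaledSqDist N q x ^ (2 * r)))) :=
          le_mul_of_one_le_left (by positivity) h16
      _ = _ := by ring
  · refine (h.abs_sub_eval_le_of_three_quarters_le hr hc hc1 hN hW hNq hq hf ⟨hx34, hx.2⟩).trans ?_
    gcongr
    norm_num

end IsLocalApprox

theorem exists_isGlobalApprox (hr : r ≠ 0) : ∃ c, 0 < c ∧ ∀ (f : ℝ → ℝ) (N W : ℝ), Continuous f →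
    0 < N → 0 ≤ W → DiffBound r f N W → (∀ x ∈ Set.Icc (0 : ℝ) 1, |f x| ≤ W * N ^ r) →
      ∀ q, 1 ≤ N * q → q ≤ 1 / 2 → ∃ P, IsGlobalApprox r f N (c * W) q P := by
  obtain ⟨c, hc1, hc⟩ := exists_isMarkovConst (2 * r)
  refine ⟨6 * 64 ^ r * c * (64 * r ^ 2) ^ (2 * r), by positivity, ?_⟩
  intro f N W hfc hN hW hdiff hfW q hNq hq
  have hr1 : (1 : ℝ) ≤ r := by exact_mod_cast hr.bot_lt
  set V := (64 * r ^ 2) ^ (2 * r) * W with hV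
  have hWV : W ≤ V := le_mul_of_one_le_left hW (one_le_pow₀ (by nlinarith))
  have hV0 : 0 ≤ V := hW.trans hWV
  have hfV : ∀ x ∈ Set.Icc (0 : ℝ) 1, |f x| ≤ V * N ^ r :=
    fun x hx => (hfW x hx).trans (by gcongr)
  choose! P hP using fun p (hp : 1 ≤ N * p ∧ p ≤ 1 / 2) =>
    hdiff.exists_isLocalApprox hr hfc hN hW hp.1 hp.2
  have hNinv : 1 / N ≤ q := (div_le_iff₀ hN).2 (by linarith)
  have hNone : N * (1 / N) = 1 := mul_one_div_cancel hN.ne'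
  have hlocal := hP q ⟨hNq, hq⟩
  have hlocal₀ := hP (1 / N) ⟨hNone.ge, hNinv.trans hq⟩
  have hbig : 6 * 64 ^ r * c * (64 * r ^ 2) ^ (2 * r) * W = 6 * 64 ^ r * c * V := by
    rw [hV]
    ring
  have h16 : (16 : ℝ) ^ r ≤ 64 ^ r := by gcongr; norm_num
  have hD (x : ℝ) : 0 ≤ scaledSqDist N q x :=
    scaledSqDist_nonneg (div_nonneg hN.le (pos_of_mul_pos_right (by linarith) hN.le).le)
  refine ⟨P q, hlocal.natDegree_lt, fun x hx => ?_, fun y hy s hrs hs => ?_⟩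
  · refine (hlocal.abs_sub_eval_le_of_mem_Icc hlocal₀ hr hc hc1 hN hV0 hNq hq hfV hx).trans ?_
    rw [hbig]
    have := hD x
    gcongr
  · refine (abs_taylor_coeff_le_of_isLocalApprox hN hNq hq
      (fun p hqp hp => hP p ⟨hNq.trans (by gcongr), hp⟩) hc (by linarith) hV0 hfV hrs hs
      hy).trans ?_
    rw [hbig]
    gcongr
    norm_num

end GlobalApproximation

section Modulus

variable {f g : ℝ → ℝ} {h x : ℝ}

theorem supAbsOn_nonneg (f : ℝ → ℝ) : 0 ≤ supAbsOn f :=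
  Real.sSup_nonneg (Set.forall_mem_image.2 fun _ _ => abs_nonneg _)

theorem abs_le_supAbsOn (hf : ContinuousOn f (Set.Icc 0 1)) (hx : x ∈ Set.Icc (0 : ℝ) 1) :
    |f x| ≤ supAbsOn f :=
  le_csSup (isCompact_Icc.image_of_continuousOn hf.abs).bddAbove ⟨x, hx, rfl⟩

theorem supAbsOn_congr (hfg : Set.EqOn f g (Set.Icc 0 1)) : supAbsOn f = supAbsOn g := by
  rw [supAbsOn, supAbsOn, Set.image_congr fun p hp => by rw [hfg hp]]

theorem supAbsOn_reflect (f : ℝ → ℝ) : supAbsOn (fun y => f (1 - y)) = supAbsOn f := by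
  have himage : (fun y : ℝ => 1 - y) '' Set.Icc 0 1 = Set.Icc 0 1 := by
    rw [Set.image_const_sub_Icc, sub_self, sub_zero]
  nth_rw 2 [supAbsOn]
  rw [← himage, Set.image_image, supAbsOn]

theorem sub_mul_mem_Icc {r k : ℕ} (hh : 0 ≤ h) (hx0 : x - r * h / 2 ∈ Set.Icc (0 : ℝ) 1)
    (hx1 : x + r * h / 2 ∈ Set.Icc (0 : ℝ) 1) (hk : k ∈ Finset.range (r + 1)) :
    x + r * h / 2 - k * h ∈ Set.Icc (0 : ℝ) 1 := by
  have hkr : (k : ℝ) * h ≤ r * h := by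
    gcongr
    exact Finset.mem_range_succ_iff.1 hk
  have hk0 : 0 ≤ (k : ℝ) * h := by positivity
  exact ⟨by linarith [hx0.1], by linarith [hx1.2]⟩

theorem abs_ditzSymmDiff_le {S : ℝ} (hS : ∀ x ∈ Set.Icc (0 : ℝ) 1, |f x| ≤ S) (r : ℕ)
    (hh : 0 ≤ h) (x : ℝ) : |ditzSymmDiff r h f x| ≤ 2 ^ r * S := by
  have hS0 : 0 ≤ S := (abs_nonneg _).trans (hS 0 ⟨le_rfl, zero_le_one⟩)
  rw [ditzSymmDiff]
  split_ifs with hx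
  · calc _ ≤ ∑ k ∈ Finset.range (r + 1), (r.choose k : ℝ) * S := by
          refine (Finset.abs_sum_le_sum_abs _ _).trans (Finset.sum_le_sum fun k hk => ?_)
          rw [abs_mul, abs_mul, abs_neg_one_pow, one_mul, Nat.abs_cast]
          gcongr
          exact hS _ (sub_mul_mem_Icc hh hx.1 hx.2 hk)
      _ = 2 ^ r * S := by
          rw [← Finset.sum_mul]
          exact_mod_cast congrArg (fun m : ℕ => (m : ℝ) * S) (Nat.sum_range_choose r)
  · rw [abs_zero]
    positivity

theorem ditzSymmDiff_congr (hfg : Set.EqOn f g (Set.Icc 0 1)) (r : ℕ) (hh : 0 ≤ h) (x : ℝ) :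
    ditzSymmDiff r h f x = ditzSymmDiff r h g x := by
  rw [ditzSymmDiff, ditzSymmDiff]
  split_ifs with hx
  · exact Finset.sum_congr rfl fun k hk => by rw [hfg (sub_mul_mem_Icc hh hx.1 hx.2 hk)]
  · rfl

theorem ditzSymmDiff_reflect (r : ℕ) (h : ℝ) (f : ℝ → ℝ) (x : ℝ) :
    ditzSymmDiff r h (fun y => f (1 - y)) x = (-1) ^ r * ditzSymmDiff r h f (1 - x) := by
  rw [ditzSymmDiff, ditzSymmDiff, mul_ite, mul_zero, ← Finset.sum_range_reflect, Finset.mul_sum]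
  refine if_congr ?_ (Finset.sum_congr rfl fun k hk => ?_) rfl
  · simp only [Set.mem_Icc]
    constructor <;> rintro ⟨⟨_, _⟩, _, _⟩ <;> refine ⟨⟨?_, ?_⟩, ?_, ?_⟩ <;> linarith
  · have hkr := Finset.mem_range_succ_iff.1 hk
    have hsign : (-1 : ℝ) ^ (r - k) = (-1) ^ r * (-1) ^ k := by
      rw [← pow_add]
      exact neg_one_pow_congr (by grind)
    rw [Nat.add_sub_cancel, Nat.choose_symm hkr, Nat.cast_sub hkr, hsign, mul_assoc, mul_assoc,
      mul_assoc]
    ring_nf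

theorem dtMod_nonneg (r : ℕ) (f : ℝ → ℝ) (t : ℝ) : 0 ≤ dtMod r f t := by
  refine Real.sSup_nonneg ?_
  rintro _ ⟨h, x, -, -, -, rfl⟩
  exact abs_nonneg _

theorem abs_ditzSymmDiff_le_dtMod (hf : ContinuousOn f (Set.Icc 0 1)) (r : ℕ) {t : ℝ}
    (hh : 0 < h) (ht : h ≤ t) (hx : x ∈ Set.Icc (0 : ℝ) 1) :
    |ditzSymmDiff r (h * √(x * (1 - x))) f x| ≤ dtMod r f t := by
  refine le_csSup ⟨2 ^ r * supAbsOn f, ?_⟩ ⟨h, x, hh, ht, hx, rfl⟩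
  rintro _ ⟨h, x, hh, -, -, rfl⟩
  exact abs_ditzSymmDiff_le (fun x hx => abs_le_supAbsOn hf hx) r (by positivity) x

theorem dtMod_congr (hfg : Set.EqOn f g (Set.Icc 0 1)) (r : ℕ) (t : ℝ) :
    dtMod r f t = dtMod r g t := by
  unfold dtMod
  congr 1
  ext y
  refine exists₂_congr fun h x => and_congr_right fun hh => ?_
  rw [ditzSymmDiff_congr hfg r (by positivity)]

theorem dtMod_reflect (r : ℕ) (f : ℝ → ℝ) (t : ℝ) :
    dtMod r (fun y => f (1 - y)) t = dtMod r f t := by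
  unfold dtMod
  congr 1
  ext y
  constructor <;> rintro ⟨h, x, hh, ht, hx, rfl⟩ <;>
    refine ⟨h, 1 - x, hh, ht, ⟨by linarith [hx.2], by linarith [hx.1]⟩, ?_⟩ <;>
    simp only [ditzSymmDiff_reflect, abs_mul, abs_neg_one_pow, one_mul, sub_sub_cancel,
      mul_comm (1 - x)]

theorem fwdDiff_iterate_eq_ditzSymmDiff (r : ℕ) (f : ℝ → ℝ) (hx : 0 ≤ x) (hh : 0 ≤ h)
    (hxh : x + r * h ≤ 1) : (fwdDiff h)^[r] f x = ditzSymmDiff r h f (x + r * h / 2) := by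
  have hrh : 0 ≤ r * h := by positivity
  rw [ditzSymmDiff, if_pos ⟨⟨by linarith, by linarith⟩, by linarith, by linarith⟩,
    fwdDiff_iter_eq_sum_shift, ← Finset.sum_range_reflect]
  refine Finset.sum_congr rfl fun k hk => ?_
  have hkr := Finset.mem_range_succ_iff.1 hk
  rw [Nat.add_sub_cancel, Nat.choose_symm hkr, Nat.sub_sub_self hkr, zsmul_eq_mul, nsmul_eq_mul,
    Nat.cast_sub hkr]
  push_cast
  congr 2
  ring

theorem diffBound_dtMod (hf : ContinuousOn f (Set.Icc 0 1)) (r : ℕ) {n : ℝ} (hn : 0 < n) :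
    DiffBound r f (2 * n) (dtMod (2 * r) f (1 / √n)) := by
  intro x v hx hv hxv hv2
  have hrv : 0 ≤ r * v := by positivity
  set u := x + r * v with hu
  have hu0 : 0 < u := by
    have := (le_div_iff₀ (by positivity)).1 hv2
    exact lt_of_lt_of_le (by positivity) this
  have hu8 : u ≤ 7 / 8 := by linarith
  have hweight : 0 < √(u * (1 - u)) := Real.sqrt_pos.2 (mul_pos hu0 (by linarith))
  have hstep : v / √(u * (1 - u)) ≤ 1 / √n := by
    rw [div_le_div_iff₀ hweight (Real.sqrt_pos.2 hn), one_mul]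
    refine Real.le_sqrt_of_sq_le ?_
    rw [mul_pow, Real.sq_sqrt hn.le]
    rw [le_div_iff₀ (by positivity)] at hv2
    nlinarith
  have hbound := abs_ditzSymmDiff_le_dtMod hf (2 * r) (by positivity) hstep ⟨hu0.le, by linarith⟩
  rw [div_mul_cancel₀ _ hweight.ne'] at hbound
  rw [fwdDiff_iterate_eq_ditzSymmDiff _ f hx hv.le (by push_cast; linarith)]
  convert hbound using 3
  rw [hu]
  push_cast
  ring

end Modulus

section Bias

variable {r : ℕ} {f g : ℝ → ℝ}

theorem jackMean_congr (hfg : Set.EqOn f g (Set.Icc 0 1)) (ns : Fin r → ℕ) (p : ℝ) :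
    jackMean ns f p = jackMean ns g p := by
  simp only [jackMean, bernstein'_congr hfg]

theorem jackMean_reflect {ns : Fin r → ℕ} (hpos : ∀ i, ns i ≠ 0) (f : ℝ → ℝ) (p : ℝ) :
    jackMean ns (fun y => f (1 - y)) p = jackMean ns f (1 - p) := by
  simp only [jackMean, bernstein'_reflect (hpos _)]

theorem exists_abs_jackMean_sub_le_of_isGlobalApprox (hr : r ≠ 0) {K C : ℝ} (hK : 1 ≤ K)
    (hC : 0 ≤ C) : ∃ c, 0 < c ∧ ∀ (ns : Fin r → ℕ) (f : ℝ → ℝ) (N W p q : ℝ) (P : Polynomial ℝ),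
      IsAdmissible ns N K C → IsGlobalApprox r f N W q P → 0 ≤ W → p ∈ Set.Icc 0 1 → p ≤ q →
        1 ≤ N * q → scaledSqDist N q p ≤ 1 → |jackMean ns f p - f p| ≤ c * W := by
  obtain ⟨a, ha0, hgrowth⟩ := exists_bernstein'_one_add_scaledSqDist_pow_le (2 * r) K
  obtain ⟨b, hb0, hpoly⟩ := exists_abs_jackMean_eval_sub_eval_le hr hK hC
  refine ⟨C * a + b + 2, by positivity, ?_⟩
  intro ns f N W p q P hns hP hW hp hpq hNq hD
  have hN := hns.pos
  have hq : 0 < q := pos_of_mul_pos_right (zero_lt_one.trans_le hNq) hN.le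
  have hremainder : |jackMean ns (fun x => f x - P.eval x) p| ≤ C * (W * a) := by
    refine hns.abs_sum_jackCoeff_mul_le (by positivity) fun i => ?_
    calc _ ≤ bernstein' (ns i) (fun x => 0 + W * (1 + scaledSqDist N q x ^ (2 * r))) p :=
          abs_bernstein'_le hp fun x hx => by
            rw [zero_add]
            exact hP.abs_sub_eval_le x hx
      _ ≤ W * a := by
          rw [bernstein'_const_add_mul, zero_add]
          gcongr
          exact hgrowth (ns i) N p q hp hpq (hns.le i) (hns.le_mul i) hNq hD
  have hpolynomial : |jackMean ns (fun x => P.eval x) p - P.eval p| ≤ b * W :=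
    hpoly ns N p q W P hns hp hpq hNq hP.natDegree_lt (hP.abs_coeff_le p ⟨hp.1, hpq⟩)
  have hcentre : |P.eval p - f p| ≤ 2 * W := by
    have := pow_le_one₀ (scaledSqDist_nonneg (by positivity)) hD (n := 2 * r)
    rw [abs_sub_comm]
    exact (hP.abs_sub_eval_le p hp).trans (by nlinarith)
  rw [show jackMean ns f p - f p = jackMean ns (fun x => f x - P.eval x) p +
    (jackMean ns (fun x => P.eval x) p - P.eval p) + (P.eval p - f p) by rw [jackMean_sub]; ring]
  calc _ ≤ _ := abs_add_three _ _ _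
    _ ≤ C * (W * a) + b * W + 2 * W := add_le_add_three hremainder hpolynomial hcentre
    _ = _ := by ring

theorem scaledSqDist_max_one_div_le {N p : ℝ} (hN : 0 < N) (hp : 0 ≤ p) :
    scaledSqDist N (max p (1 / N)) p ≤ 1 := by
  rcases le_total (1 / N) p with hNp | hNp
  · rw [max_eq_left hNp, scaledSqDist]
    norm_num
  · rw [max_eq_right hNp, scaledSqDist]
    calc (p - 1 / N) ^ 2 * (N / (1 / N)) ≤ (1 / N) ^ 2 * (N / (1 / N)) := by
          gcongr ?_ * _
          nlinarith
      _ = 1 := by field_simp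

theorem exists_abs_jackMean_sub_le_of_diffBound (hr : r ≠ 0) {K C : ℝ} (hK : 1 ≤ K) (hC : 0 ≤ C) :
    ∃ c, 0 < c ∧ ∀ (ns : Fin r → ℕ) (f : ℝ → ℝ) (N W : ℝ), IsAdmissible ns N K C → 2 ≤ N →
      Continuous f → 0 ≤ W → DiffBound r f N W → (∀ x ∈ Set.Icc (0 : ℝ) 1, |f x| ≤ W * N ^ r) →
        ∀ p ∈ Set.Icc (0 : ℝ) (1 / 2), |jackMean ns f p - f p| ≤ c * W := by
  obtain ⟨a, ha0, happrox⟩ := exists_isGlobalApprox hr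
  obtain ⟨b, hb0, hbias⟩ := exists_abs_jackMean_sub_le_of_isGlobalApprox hr hK hC
  refine ⟨b * a, by positivity, ?_⟩
  intro ns f N W hns hN2 hf hW hdiff hfW p hp
  have hN := hns.pos
  have hNq : 1 ≤ N * max p (1 / N) := by
    calc 1 = N * (1 / N) := (mul_one_div_cancel hN.ne').symm
      _ ≤ _ := by gcongr; exact le_max_right _ _
  have hq : max p (1 / N) ≤ 1 / 2 := max_le hp.2 (one_div_le_one_div_of_le two_pos hN2)
  obtain ⟨P, hP⟩ := happrox f N W hf hN hW hdiff hfW _ hNq hq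
  rw [mul_assoc]
  exact hbias ns f N (a * W) p _ P hns hP (by positivity) ⟨hp.1, by linarith [hp.2]⟩
    (le_max_left _ _) hNq (scaledSqDist_max_one_div_le hN hp.1)

theorem exists_abs_jackMean_sub_le_of_le_half (hr : r ≠ 0) {K C : ℝ} (hK : 1 ≤ K) (hC : 0 ≤ C) :
    ∃ c, 0 < c ∧ ∀ (ns : Fin r → ℕ) (f : ℝ → ℝ) (n : ℝ), IsAdmissible ns n K C → 1 ≤ n →
      ContinuousOn f (Set.Icc 0 1) → ∀ p ∈ Set.Icc (0 : ℝ) (1 / 2), |jackMean ns f p - f p| ≤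
        c * (dtMod (2 * r) f (1 / √n) + supAbsOn f / n ^ r) := by
  obtain ⟨c, hc0, hc⟩ := exists_abs_jackMean_sub_le_of_diffBound (K := 2 * K) hr (by linarith) hC
  refine ⟨c, hc0, fun ns f n hns hn hf p hp => ?_⟩
  set g : ℝ → ℝ := Set.IccExtend zero_le_one ((Set.Icc (0 : ℝ) 1).domRestrict f) with hg
  have hgc : Continuous g := (continuousOn_iff_continuous_domRestrict.1 hf).Icc_extend'
  have hfg : Set.EqOn f g (Set.Icc 0 1) := fun x hx => by
    rw [hg, Set.IccExtend_of_mem _ _ hx, Set.domRestrict_apply]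
  have hn0 := hns.pos
  rw [jackMean_congr hfg, dtMod_congr hfg, supAbsOn_congr hfg, hfg ⟨hp.1, by linarith [hp.2]⟩]
  have hmod := dtMod_nonneg (2 * r) g (1 / √n)
  have hsup : 0 ≤ supAbsOn g / n ^ r := div_nonneg (supAbsOn_nonneg g) (by positivity)
  refine hc ns g (2 * n) _ ?_ (by linarith) hgc (by positivity) ?_ (fun x hx => ?_) p hp
  · exact { hns with
      pos := by positivity
      le := fun i => by linarith [hns.le i]
      le_mul := fun i => by linarith [hns.le_mul i] }
  · exact fun x v hx hv hxv hv2 =>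
      (diffBound_dtMod hgc.continuousOn r hn0 x v hx hv hxv hv2).trans (by linarith)
  · calc |g x| ≤ supAbsOn g := abs_le_supAbsOn hgc.continuousOn hx
      _ = supAbsOn g / n ^ r * n ^ r := (div_mul_cancel₀ _ (by positivity)).symm
      _ ≤ _ := by gcongr <;> linarith

theorem exists_abs_jackMean_sub_le (hr : r ≠ 0) {K C : ℝ} (hK : 1 ≤ K) (hC : 0 ≤ C) :
    ∃ c, 0 < c ∧ ∀ (ns : Fin r → ℕ) (f : ℝ → ℝ) (n : ℝ), IsAdmissible ns n K C → 1 ≤ n →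
      ContinuousOn f (Set.Icc 0 1) → ∀ p ∈ Set.Icc (0 : ℝ) 1, |jackMean ns f p - f p| ≤
        c * (dtMod (2 * r) f (1 / √n) + supAbsOn f / n ^ r) := by
  obtain ⟨c, hc0, hc⟩ := exists_abs_jackMean_sub_le_of_le_half hr hK hC
  refine ⟨c, hc0, fun ns f n hns hn hf p hp => ?_⟩
  rcases le_total p (1 / 2) with hp2 | hp2
  · exact hc ns f n hns hn hf p ⟨hp.1, hp2⟩
  · have hreflect : ContinuousOn (fun y => f (1 - y)) (Set.Icc 0 1) :=
      hf.comp (by fun_prop) fun y hy => ⟨by linarith [hy.2], by linarith [hy.1]⟩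
    simpa only [jackMean_reflect hns.ne_zero, dtMod_reflect, supAbsOn_reflect, sub_sub_cancel]
      using hc ns _ n hns hn hreflect (1 - p) ⟨by linarith [hp.2], by linarith⟩

theorem isAdmissible_of_strictMono {ns : Fin r → ℕ} {n : ℕ} {K C : ℝ} (hr : 1 ≤ r) (hK : 0 < K)
    (hn : 1 ≤ n) (hmono : StrictMono ns) (hlow : (n : ℝ) / K ≤ ns ⟨0, by omega⟩)
    (hup : ns ⟨r - 1, by omega⟩ ≤ n) (hC : ∑ i, |jackCoeff ns i| ≤ C) :
    IsAdmissible ns n K C where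
  injective := hmono.injective
  pos := by exact_mod_cast hn
  le i := by
    exact_mod_cast (hmono.monotone (Fin.le_def.2 (Nat.le_sub_one_of_lt i.2))).trans hup
  le_mul i := by
    have hfirst : ns ⟨0, by omega⟩ ≤ ns i := hmono.monotone (Fin.le_def.2 i.1.zero_le)
    rw [mul_comm]
    exact (div_le_iff₀ hK).1 (hlow.trans (by exact_mod_cast hfirst))
  sum_abs_jackCoeff_le := hC

end Bias

/-- bias of a bounded-coefficients `r`-jackknife is
`O(ω_φ^{2r}(f, 1/√n) + n^{-r} ‖f‖)`, uniformly over admissible sample sizes and `f ∈ C[0,1]`. -/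
theorem jackknife_bias_upper (r : ℕ) (hr : 1 ≤ r) (K C : ℝ) (hK : 1 ≤ K) (hC : 0 < C) :
    ∃ c > 0, ∀ n : ℕ, 1 ≤ n → ∀ ns : Fin r → ℕ,
      StrictMono ns →
      (n : ℝ) / K ≤ (ns ⟨0, by omega⟩ : ℝ) →
      ns ⟨r - 1, by omega⟩ ≤ n →
      (∑ i, |jackCoeff ns i|) ≤ C →
      ∀ f : ℝ → ℝ, ContinuousOn f (Set.Icc 0 1) →
        jackBias ns f ≤
          c * (dtMod (2 * r) f (1 / Real.sqrt n) + supAbsOn f / (n : ℝ) ^ r) := by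
  obtain ⟨c, hc, hbias⟩ := exists_abs_jackMean_sub_le (by omega : r ≠ 0) hK hC.le
  refine ⟨c, hc, fun n hn ns hmono hlow hup hsum f hf => ?_⟩
  have hns : IsAdmissible ns n K C :=
    isAdmissible_of_strictMono hr (by linarith) hn hmono hlow hup hsum
  refine csSup_le ((Set.nonempty_Icc.2 zero_le_one).image _) (Set.forall_mem_image.2 fun p hp => ?_)
  exact hbias ns f n hns (by exact_mod_cast hn) hf p hp
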